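/- arXiv:2109.13718 — 11 statements merged into one kernel-verified Lean document; each statement's English description precedes it below -/
import Mathlib

section
/- Let p be a prime and d a positive integer, and let Y be a d×d matrix over ℚ_p. If the logarithm series log(1+Y) = −∑_{n≥1} (−1)ⁿ Yⁿ/n converges (i.e. the family ((−1)^{n+1}/n)·Yⁿ, n ≥ 1, is summable in M_d(ℚ_p)), then every coefficient of the characteristic polynomial χ_Y of degree strictly less than d lies in pℤ_p, i.e. has p-adic absolute value at most 1/p. -/
/-!
Since `|1/n| ≥ 1`, convergence of the logarithm series forces `Y ^ n → 0`, so some power `Y ^ N`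
with `N ≥ 1` has all its entries in `pℤ_p`. From `X - Y ∣ X ^ N - Y ^ N`, taking determinants, `χ_Y`
divides `χ_{Y ^ N}(X ^ N)` (`charpoly_dvd_expand_charpoly_pow`), a monic polynomial over `ℤ_p` which
is a power of `X` modulo `p`. As `ℤ_p` is integrally closed, the monic factor `χ_Y` has coefficients
in `ℤ_p`, and its reduction is a monic divisor of a power of `X` over a field, hence is `X ^ d`.
-/

open Polynomial

/-- The determinant of the factorization `X ^ N - Y ^ N = (X - Y) * ∑ X ^ i * Y ^ (N - 1 - i)`. -/
theorem charpoly_dvd_expand_charpoly_pow {R : Type*} [CommRing R] {d : ℕ}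
    (Y : Matrix (Fin d) (Fin d) R) (N : ℕ) :
    Y.charpoly ∣ expand R N (Y ^ N).charpoly := by
  have hc : Commute (Matrix.scalar (Fin d) (X : R[X])) (C.mapMatrix Y) :=
    Matrix.scalar_commute _ (fun r => Commute.all _ _) _
  have h := hc.mul_geom_sum₂ N
  have h2 : expand R N (Y ^ N).charpoly =
      (Matrix.scalar (Fin d) (X : R[X]) ^ N - (C.mapMatrix Y) ^ N).det := by
    rw [Matrix.charpoly, ← AlgHom.coe_toRingHom, RingHom.map_det, Matrix.charmatrix, ← map_pow,
      ← map_pow]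
    congr 1
    ext1 i j
    by_cases hij : i = j <;> simp [hij]
  rw [h2, ← h, Matrix.det_mul]
  exact Dvd.intro _ rfl

/-- A monic divisor of a power of `X` over a field has no coefficients below the leading one. -/
theorem coeff_eq_zero_of_monic_of_dvd_X_pow {k : Type*} [Field k] {f : k[X]} (hf : f.Monic)
    {m i : ℕ} (h : f ∣ X ^ m) (hi : i < f.natDegree) : f.coeff i = 0 := by
  obtain ⟨j, -, hj⟩ := (dvd_prime_pow prime_X m).1 h
  have hfj : f = X ^ j := eq_of_monic_of_associated hf (monic_X_pow j) hj
  subst hfj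
  rw [natDegree_X_pow] at hi
  rw [coeff_X_pow, if_neg hi.ne]

theorem exists_pow_entries_norm_lt_one (p : ℕ) [Fact p.Prime] (d : ℕ)
    (Y : Matrix (Fin d) (Fin d) ℚ_[p])
    (hconv : Summable fun n : ℕ => ((-1 : ℚ_[p]) ^ (n + 1) * (n : ℚ_[p])⁻¹) • Y ^ n) :
    ∃ N : ℕ, 0 < N ∧ ∀ i j, ‖(Y ^ N) i j‖ < 1 := by
  have h0 := hconv.tendsto_atTop_zero
  have h1 : ∀ i j, ∀ᶠ n : ℕ in Filter.atTop,
      ‖(((-1 : ℚ_[p]) ^ (n + 1) * (n : ℚ_[p])⁻¹) • Y ^ n) i j‖ < 1 := by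
    intro i j
    have h2 := (tendsto_pi_nhds.1 (tendsto_pi_nhds.1 h0 i) j).norm
    exact h2.eventually (gt_mem_nhds (by simp))
  have h3 := Filter.eventually_all.2 fun i => Filter.eventually_all.2 (h1 i)
  obtain ⟨N, hN, hpos⟩ := (h3.and (Filter.eventually_gt_atTop 0)).exists
  refine ⟨N, hpos, fun i j => lt_of_le_of_lt ?_ (hN i j)⟩
  have hn0 : 0 < ‖(N : ℚ_[p])‖ := norm_pos_iff.2 (by exact_mod_cast hpos.ne')
  have hn1 : ‖(N : ℚ_[p])‖ ≤ 1 := by simpa using Padic.norm_int_le_one (p := p) (N : ℤ)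
  rw [Matrix.smul_apply, smul_eq_mul, norm_mul, norm_mul, norm_pow, norm_neg, norm_one, one_pow,
    one_mul, norm_inv]
  exact le_mul_of_one_le_left (norm_nonneg _) ((one_le_inv₀ hn0).2 hn1)


/-- Let `p` be a prime and `d` a positive integer, and let `Y` be a `d × d`
matrix over `ℚ_p`. If the logarithm series `log(1+Y) = -∑_{n ≥ 1} (-1)ⁿ Yⁿ / n` converges,
i.e. the family `((-1)^{n+1} / n) • Yⁿ`, `n ≥ 1` (here extended by `0` at `n = 0`, since
`(0 : ℚ_p)⁻¹ = 0`), is summable in `M_d(ℚ_p)`, then every coefficient of the characteristic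
polynomial of `Y` of degree strictly less than `d` lies in `pℤ_p`, i.e. has `p`-adic absolute
value at most `1/p`. -/
theorem stmt_0 (p : ℕ) [Fact p.Prime] (d : ℕ) (hd : 0 < d)
    (Y : Matrix (Fin d) (Fin d) ℚ_[p])
    (hconv : Summable fun n : ℕ => ((-1 : ℚ_[p]) ^ (n + 1) * (n : ℚ_[p])⁻¹) • Y ^ n) :
    ∀ i < d, ‖Y.charpoly.coeff i‖ ≤ (p : ℝ)⁻¹ := by
  intro i hi
  obtain ⟨N, hN, hY⟩ := exists_pow_entries_norm_lt_one p d Y hconv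
  let A : Matrix (Fin d) (Fin d) ℤ_[p] := fun i j => ⟨(Y ^ N) i j, (hY i j).le⟩
  have hA : (algebraMap ℤ_[p] ℚ_[p]).mapMatrix A = Y ^ N := by ext i j; rfl
  have hAbar : (PadicInt.toZMod (p := p)).mapMatrix A = 0 := by
    ext i j
    have h : A i j ∈ RingHom.ker (PadicInt.toZMod (p := p)) := by
      rw [PadicInt.ker_toZMod, IsLocalRing.mem_maximalIdeal, PadicInt.mem_nonunits]
      exact hY i j
    exact h
  have hmonic : (expand ℤ_[p] N A.charpoly).Monic := (Matrix.charpoly_monic A).expand hN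
  have hdvd : Y.charpoly ∣ (expand ℤ_[p] N A.charpoly).map (algebraMap ℤ_[p] ℚ_[p]) := by
    have h := charpoly_dvd_expand_charpoly_pow Y N
    rwa [← hA, RingHom.mapMatrix_apply, Matrix.charpoly_map, ← map_expand] at h
  obtain ⟨f, hf⟩ := IsIntegrallyClosed.eq_map_mul_C_of_dvd ℚ_[p] hmonic hdvd
  rw [(Matrix.charpoly_monic Y).leadingCoeff, C_1, mul_one] at hf
  have hinj : Function.Injective (algebraMap ℤ_[p] ℚ_[p]) := IsFractionRing.injective _ _
  have hfm : f.Monic := monic_of_injective hinj (hf ▸ Matrix.charpoly_monic Y)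
  have hfdvd : f ∣ expand ℤ_[p] N A.charpoly := by
    rw [← hf] at hdvd
    exact (map_dvd_map _ hinj hfm).1 hdvd
  have hbar : f.map (PadicInt.toZMod (p := p)) ∣ X ^ (N * d) := by
    have h := Polynomial.map_dvd (PadicInt.toZMod (p := p)) hfdvd
    rw [map_expand, ← Matrix.charpoly_map, ← RingHom.mapMatrix_apply, hAbar,
      Matrix.charpoly_zero] at h
    simpa [← pow_mul] using h
  have hdeg : (f.map (PadicInt.toZMod (p := p))).natDegree = d := by
    rw [hfm.natDegree_map, ← hfm.natDegree_map (algebraMap ℤ_[p] ℚ_[p]), hf,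
      Matrix.charpoly_natDegree_eq_dim, Fintype.card_fin]
  have hz := coeff_eq_zero_of_monic_of_dvd_X_pow (hfm.map _) hbar (hdeg.symm ▸ hi)
  rw [coeff_map, ← RingHom.mem_ker, PadicInt.ker_toZMod, IsLocalRing.mem_maximalIdeal,
    PadicInt.mem_nonunits] at hz
  rw [← hf, coeff_map]
  -- The value group is discrete, so `‖x‖ < 1 = p ^ 0` amounts to `‖x‖ ≤ p ^ (-1)`.
  have := (PadicInt.norm_le_pow_iff_norm_lt_pow_add_one (f.coeff i) (-1)).2 (by simpa using hz)
  simpa using this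
end

section
/- Let p be a prime and d a positive integer, and let Y be a d×d matrix over ℚ_p such that every coefficient of the characteristic polynomial χ_Y of degree strictly less than d has p-adic absolute value at most 1/p. Then the logarithm series log(1+Y) = −∑_{n≥1} (−1)ⁿ Yⁿ/n converges, i.e. the family ((−1)^{n+1}/n)·Yⁿ, n ≥ 1, is summable in M_d(ℚ_p). -/
/-!
By Cayley–Hamilton each entry `uₙ` of `Yⁿ` satisfies the linear recurrence
`u_{n+d} = -∑_{k<d} c_k u_{n+k}`, where `c_k` are the coefficients of the characteristic polynomial.
As `‖c_k‖ ≤ 1/p`, the ultrametric inequality gives geometric decay `‖uₙ‖ ≤ C p^{-⌊n/d⌋}`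
(`norm_le_of_recurrence`). On the other side `‖1/n‖ ≤ n` (`norm_inv_natCast_le`), so the
entries of the general term tend to `0`, which suffices for summability in the complete
nonarchimedean field `ℚ_p`.
-/

/-- The `p`-part of `n` is at most `n`; for `n = 0` this uses `0⁻¹ = 0`. -/
lemma norm_inv_natCast_le (p : ℕ) [Fact p.Prime] (n : ℕ) : ‖(n : ℚ_[p])⁻¹‖ ≤ n := by
  rcases Nat.eq_zero_or_pos n with rfl | hn
  · simp
  have hn' : (n : ℚ_[p]) ≠ 0 := by exact_mod_cast hn.ne'
  rw [norm_inv, Padic.norm_eq_zpow_neg_valuation hn', Padic.valuation_natCast, zpow_neg, inv_inv,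
    zpow_natCast]
  exact_mod_cast Nat.le_of_dvd hn pow_padicValNat_dvd

/-- An ultrametric linear recurrence of order `d` whose coefficients have norm at most `r ≤ 1`
gains a factor `r` every `d` steps. -/
lemma norm_le_of_recurrence {K : Type*} [NormedField K] [IsUltrametricDist K] {d : ℕ} (hd : 0 < d)
    {r : ℝ} (hr0 : 0 ≤ r) (hr1 : r ≤ 1) (c : ℕ → K) (hc : ∀ i < d, ‖c i‖ ≤ r) (u : ℕ → K)
    (hu : ∀ n, u (n + d) = -∑ k ∈ Finset.range d, c k * u (n + k)) (n : ℕ) :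
    ‖u n‖ ≤ (∑ k ∈ Finset.range d, ‖u k‖) * r ^ (n / d) := by
  have hC : 0 ≤ ∑ k ∈ Finset.range d, ‖u k‖ := Finset.sum_nonneg fun _ _ => norm_nonneg _
  induction n using Nat.strong_induction_on with
  | _ n ih =>
    rcases lt_or_ge n d with h | h
    · rw [Nat.div_eq_of_lt h, pow_zero, mul_one]
      exact Finset.single_le_sum (f := fun k => ‖u k‖) (fun _ _ => norm_nonneg _)
        (Finset.mem_range.2 h)
    · obtain ⟨m, rfl⟩ := Nat.exists_eq_add_of_le' h
      rw [hu, norm_neg, Nat.add_div_right m hd]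
      refine IsUltrametricDist.norm_sum_le_of_forall_le_of_nonneg (by positivity) fun k hk => ?_
      have hk := Finset.mem_range.1 hk
      calc ‖c k * u (m + k)‖ = ‖c k‖ * ‖u (m + k)‖ := norm_mul _ _
        _ ≤ r * ((∑ k ∈ Finset.range d, ‖u k‖) * r ^ (m / d)) := by
          refine mul_le_mul (hc k hk) ((ih _ (by omega)).trans ?_) (norm_nonneg _) hr0
          exact mul_le_mul_of_nonneg_left
            (pow_le_pow_of_le_one hr0 hr1 (Nat.div_le_div_right (by omega))) hC
        _ = _ := by rw [pow_succ]; ring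

/-- The entries of the powers of `Y` satisfy the recurrence given by Cayley–Hamilton. -/
lemma pow_entry_recurrence {K : Type*} [Field K] {d : ℕ} (Y : Matrix (Fin d) (Fin d) K)
    (i j : Fin d) (n : ℕ) :
    (Y ^ (n + d)) i j = -∑ k ∈ Finset.range d, Y.charpoly.coeff k * (Y ^ (n + k)) i j := by
  have h := Y.aeval_self_charpoly
  have hdeg : Y.charpoly.natDegree = d := by simp
  have hlead : Y.charpoly.coeff d = 1 := by
    have := Y.charpoly_monic.coeff_natDegree
    rwa [hdeg] at this
  rw [Polynomial.aeval_eq_sum_range, hdeg, Finset.sum_range_succ, hlead, one_smul] at h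
  have h2 := congrArg (fun M => (Y ^ n * M) i j) h
  simp only [mul_add, Finset.mul_sum, mul_smul_comm, ← pow_add, Matrix.add_apply,
    Matrix.sum_apply, Matrix.smul_apply, smul_eq_mul, mul_zero, Matrix.zero_apply] at h2
  exact eq_neg_of_add_eq_zero_right h2

lemma tendsto_natCast_mul_pow_div {d : ℕ} (hd : 0 < d) {r : ℝ} (hr0 : 0 ≤ r) (hr1 : r < 1) :
    Filter.Tendsto (fun n : ℕ => (n : ℝ) * r ^ (n / d)) Filter.atTop (nhds 0) := by
  have hlim : Filter.Tendsto (fun m : ℕ => (d : ℝ) * (m * r ^ m) + d * r ^ m)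
      Filter.atTop (nhds 0) := by
    simpa using ((tendsto_self_mul_const_pow_of_lt_one hr0 hr1).const_mul (d : ℝ)).add
      ((tendsto_pow_atTop_nhds_zero_of_lt_one hr0 hr1).const_mul (d : ℝ))
  refine squeeze_zero (fun n => by positivity) (fun n => ?_)
    (hlim.comp (Nat.tendsto_div_const_atTop hd.ne'))
  have hn : (n : ℝ) ≤ d * (n / d : ℕ) + d := by
    exact_mod_cast (Nat.lt_mul_div_succ n hd).le
  calc (n : ℝ) * r ^ (n / d) ≤ (d * (n / d : ℕ) + d) * r ^ (n / d) := by gcongr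
    _ = _ := by simp only [Function.comp]; ring

/-- Let `p` be a prime and `d` a positive integer, and let `Y` be a `d × d`
matrix over `ℚ_p` such that every coefficient of the characteristic polynomial of `Y` of degree
strictly less than `d` has `p`-adic absolute value at most `1/p`. Then the logarithm series
`log(1+Y) = -∑_{n ≥ 1} (-1)ⁿ Yⁿ / n` converges, i.e. the family `((-1)^{n+1} / n) • Yⁿ`,
`n ≥ 1` (here extended by `0` at `n = 0`, since `(0 : ℚ_p)⁻¹ = 0`), is summable in
`M_d(ℚ_p)`. -/
theorem stmt_1 (p : ℕ) [Fact p.Prime] (d : ℕ) (hd : 0 < d)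
    (Y : Matrix (Fin d) (Fin d) ℚ_[p])
    (hchi : ∀ i < d, ‖Y.charpoly.coeff i‖ ≤ (p : ℝ)⁻¹) :
    Summable fun n : ℕ => ((-1 : ℚ_[p]) ^ (n + 1) * (n : ℚ_[p])⁻¹) • Y ^ n := by
  have hp1 : (1 : ℝ) < p := by exact_mod_cast (Fact.out : p.Prime).one_lt
  have hr0 : (0 : ℝ) ≤ (p : ℝ)⁻¹ := by positivity
  have hr1 : (p : ℝ)⁻¹ < 1 := inv_lt_one_of_one_lt₀ hp1
  refine Pi.summable.2 fun i => Pi.summable.2 fun j => ?_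
  refine NonarchimedeanAddGroup.summable_of_tendsto_cofinite_zero ?_
  rw [Nat.cofinite_eq_atTop]
  have hdecay := norm_le_of_recurrence hd hr0 hr1.le _ hchi (fun n => (Y ^ n) i j)
    (pow_entry_recurrence Y i j)
  have hlim := (tendsto_natCast_mul_pow_div hd hr0 hr1).const_mul
    (∑ k ∈ Finset.range d, ‖(Y ^ k) i j‖)
  rw [mul_zero] at hlim
  refine squeeze_zero_norm (fun n => ?_) hlim
  calc ‖(((-1 : ℚ_[p]) ^ (n + 1) * (n : ℚ_[p])⁻¹) • Y ^ n) i j‖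
      = ‖(n : ℚ_[p])⁻¹‖ * ‖(Y ^ n) i j‖ := by
        rw [Matrix.smul_apply, smul_eq_mul, norm_mul, norm_mul, norm_pow, norm_neg, norm_one,
          one_pow, one_mul]
    _ ≤ n * ((∑ k ∈ Finset.range d, ‖(Y ^ k) i j‖) * (p : ℝ)⁻¹ ^ (n / d)) :=
        mul_le_mul (norm_inv_natCast_le p n) (hdecay n) (norm_nonneg _) (Nat.cast_nonneg n)
    _ = _ := by ring
end

section
/- Let p be a prime and d a positive integer, and let Y be a d×d matrix over ℚ_p such that every coefficient of the characteristic polynomial χ_Y of degree strictly less than d has p-adic absolute value at most 1/p. Then the sum L = −∑_{n≥1} (−1)ⁿ Yⁿ/n of the logarithm series satisfies ‖L‖ ≤ d · H_p(Y)^{d−1}, where ‖L‖ is the maximum of the p-adic absolute values of the entries of L and H_p(Y) = max(1, ‖Y‖). -/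
/-!
Every term of the logarithm series obeys the claimed bound, so the ultrametric inequality gives
the bound for the sum; should the series fail to be summable, the junk value `0` of `∑'` obeys it
too, so summability never has to be proved.

Write `H` for the local height of `Y`. By Cayley–Hamilton, `Y ^ (m + d)` is a combination of
`Y ^ m, …, Y ^ (m + d - 1)` with coefficients of absolute value at most `1/p`. Starting from
`‖Y ^ n‖ ≤ H ^ n ≤ H ^ (d - 1)` for `n < d`, strong induction gives
`‖Y ^ n‖ ≤ p ^ (-⌊n/d⌋) * H ^ (d - 1)` (`norm_pow_apply_le`). On the other hand, with `q = ⌊n/d⌋`,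
`1/|n|_p ≤ n ≤ d * (q + 1) ≤ d * p ^ q` for `n ≥ 1` (`norm_inv_natCast_le`), and the powers of `p`
cancel in the product.
-/

/-- The sup-of-entries norm on `d × d` matrices over `ℚ_p`. -/
noncomputable def matNorm {p : ℕ} [Fact p.Prime] {d : ℕ}
    (Z : Matrix (Fin d) (Fin d) ℚ_[p]) : ℝ :=
  ⨆ i, ⨆ j, ‖Z i j‖

/-- The local height `H_p(Z) = max(1, ‖Z‖)` of a matrix over `ℚ_p`. -/
noncomputable def localHeight {p : ℕ} [Fact p.Prime] {d : ℕ}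
    (Z : Matrix (Fin d) (Fin d) ℚ_[p]) : ℝ :=
  max 1 (matNorm Z)

section LogBound

variable {p : ℕ} [Fact p.Prime] {d : ℕ}

lemma norm_apply_le_matNorm (Z : Matrix (Fin d) (Fin d) ℚ_[p]) (i j : Fin d) :
    ‖Z i j‖ ≤ matNorm Z :=
  (le_ciSup (f := fun j => ‖Z i j‖) (Set.finite_range _).bddAbove j).trans
    (le_ciSup (f := fun i => ⨆ j, ‖Z i j‖) (Set.finite_range _).bddAbove i)

lemma norm_apply_le_localHeight (Z : Matrix (Fin d) (Fin d) ℚ_[p]) (i j : Fin d) :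
    ‖Z i j‖ ≤ localHeight Z :=
  (norm_apply_le_matNorm Z i j).trans (le_max_right _ _)

lemma one_le_localHeight (Z : Matrix (Fin d) (Fin d) ℚ_[p]) : 1 ≤ localHeight Z :=
  le_max_left _ _

lemma norm_pow_apply_le_localHeight_pow (Y : Matrix (Fin d) (Fin d) ℚ_[p]) (n : ℕ)
    (i j : Fin d) : ‖(Y ^ n) i j‖ ≤ localHeight Y ^ n := by
  have hH : 0 ≤ localHeight Y := zero_le_one.trans (one_le_localHeight Y)
  induction n generalizing i j with
  | zero =>
    rw [pow_zero, pow_zero, Matrix.one_apply]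
    split_ifs <;> simp
  | succ n ih =>
    rw [pow_succ, Matrix.mul_apply]
    refine IsUltrametricDist.norm_sum_le_of_forall_le_of_nonneg (by positivity) fun k _ => ?_
    rw [norm_mul, pow_succ]
    exact mul_le_mul (ih i k) (norm_apply_le_localHeight Y k j) (norm_nonneg _) (by positivity)

/-- Cayley–Hamilton, as a linear recurrence for the powers of `Y`. -/
lemma pow_add_dim_eq (Y : Matrix (Fin d) (Fin d) ℚ_[p]) (m : ℕ) :
    Y ^ (m + d) = ∑ k ∈ Finset.range d, (-Y.charpoly.coeff k) • Y ^ (m + k) := by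
  have h := Matrix.aeval_self_charpoly Y
  have hdeg : Y.charpoly.natDegree = d := by simp
  have hlead : Y.charpoly.coeff d = 1 := by
    have := Y.charpoly_monic.coeff_natDegree
    rwa [hdeg] at this
  rw [Polynomial.aeval_eq_sum_range, hdeg, Finset.sum_range_succ, hlead, one_smul] at h
  rw [pow_add, eq_neg_of_add_eq_zero_right h, ← Finset.sum_neg_distrib, Finset.mul_sum]
  refine Finset.sum_congr rfl fun k _ => ?_
  rw [pow_add, neg_smul, mul_neg, mul_smul_comm]

/-- Each block of `d` further factors of `Y` gains a factor `1/p`, by the Cayley–Hamilton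
recurrence. -/
lemma norm_pow_apply_le (hd : 0 < d) (Y : Matrix (Fin d) (Fin d) ℚ_[p])
    (hchi : ∀ i < d, ‖Y.charpoly.coeff i‖ ≤ (p : ℝ)⁻¹) (n : ℕ) (i j : Fin d) :
    ‖(Y ^ n) i j‖ ≤ (p : ℝ)⁻¹ ^ (n / d) * localHeight Y ^ (d - 1) := by
  have hH := one_le_localHeight Y
  have hH0 : 0 ≤ localHeight Y := zero_le_one.trans hH
  have hp1 : (p : ℝ)⁻¹ ≤ 1 := inv_le_one_of_one_le₀ (by exact_mod_cast (Fact.out : p.Prime).one_le)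
  induction n using Nat.strong_induction_on generalizing i j with
  | _ n ih =>
    rcases lt_or_ge n d with hn | hn
    · rw [Nat.div_eq_of_lt hn, pow_zero, one_mul]
      exact (norm_pow_apply_le_localHeight_pow Y n i j).trans
        (pow_le_pow_right₀ hH (by omega))
    · obtain ⟨m, rfl⟩ := Nat.exists_eq_add_of_le' hn
      rw [pow_add_dim_eq, Matrix.sum_apply]
      refine IsUltrametricDist.norm_sum_le_of_forall_le_of_nonneg (by positivity) fun k hk => ?_
      have hk := Finset.mem_range.mp hk
      rw [Matrix.smul_apply, smul_eq_mul, norm_mul, norm_neg, Nat.add_div_right _ hd, pow_succ',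
        mul_assoc]
      refine mul_le_mul (hchi k hk) ((ih (m + k) (by omega) i j).trans ?_) (norm_nonneg _)
        (by positivity)
      exact mul_le_mul_of_nonneg_right
        (pow_le_pow_of_le_one (by positivity) hp1 (Nat.div_le_div_right (by omega)))
        (by positivity)

lemma norm_inv_natCast_le_s2 (hd : 0 < d) (n : ℕ) :
    ‖(n : ℚ_[p])⁻¹‖ ≤ d * (p : ℝ) ^ (n / d) := by
  rcases Nat.eq_zero_or_pos n with rfl | hn
  · simp
  have hval : ‖(n : ℚ_[p])⁻¹‖ = ((p ^ padicValNat p n : ℕ) : ℝ) := by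
    rw [norm_inv, Padic.norm_eq_zpow_neg_valuation (by exact_mod_cast hn.ne'),
      Padic.valuation_natCast, zpow_neg, inv_inv, zpow_natCast, Nat.cast_pow]
  have h1 : p ^ padicValNat p n ≤ n := Nat.le_of_dvd hn pow_padicValNat_dvd
  have h2 : n ≤ d * (n / d + 1) := (Nat.lt_mul_div_succ n hd).le
  have h3 : n / d + 1 ≤ p ^ (n / d) := Nat.lt_pow_self (Fact.out : p.Prime).one_lt
  rw [hval]
  exact_mod_cast h1.trans (h2.trans (Nat.mul_le_mul_left d h3))

lemma norm_log_term_apply_le (hd : 0 < d) (Y : Matrix (Fin d) (Fin d) ℚ_[p])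
    (hchi : ∀ i < d, ‖Y.charpoly.coeff i‖ ≤ (p : ℝ)⁻¹) (n : ℕ) (i j : Fin d) :
    ‖(((-1 : ℚ_[p]) ^ (n + 1) * (n : ℚ_[p])⁻¹) • Y ^ n) i j‖
      ≤ (d : ℝ) * localHeight Y ^ (d - 1) := by
  have hp : (p : ℝ) ≠ 0 := by exact_mod_cast (Fact.out : p.Prime).ne_zero
  rw [Matrix.smul_apply, smul_eq_mul, norm_mul, norm_mul, norm_pow, norm_neg, norm_one, one_pow,
    one_mul]
  calc ‖(n : ℚ_[p])⁻¹‖ * ‖(Y ^ n) i j‖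
      ≤ (d * (p : ℝ) ^ (n / d)) * ((p : ℝ)⁻¹ ^ (n / d) * localHeight Y ^ (d - 1)) :=
        mul_le_mul (norm_inv_natCast_le_s2 hd n) (norm_pow_apply_le hd Y hchi n i j)
          (norm_nonneg _) (by positivity)
    _ = (d : ℝ) * localHeight Y ^ (d - 1) := by
        rw [inv_pow]
        field_simp

end LogBound


/-- Let `p` be a prime and `d` a positive integer, and let `Y` be a `d × d`
matrix over `ℚ_p` such that every coefficient of the characteristic polynomial of `Y` of degree
strictly less than `d` has `p`-adic absolute value at most `1/p`. Then the sum
`L = -∑_{n ≥ 1} (-1)ⁿ Yⁿ / n` of the logarithm series satisfies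
`‖L‖ ≤ d * H_p(Y) ^ (d - 1)`. -/
theorem stmt_2 (p : ℕ) [Fact p.Prime] (d : ℕ) (hd : 0 < d)
    (Y : Matrix (Fin d) (Fin d) ℚ_[p])
    (hchi : ∀ i < d, ‖Y.charpoly.coeff i‖ ≤ (p : ℝ)⁻¹) :
    matNorm (∑' n : ℕ, ((-1 : ℚ_[p]) ^ (n + 1) * (n : ℚ_[p])⁻¹) • Y ^ n)
      ≤ (d : ℝ) * localHeight Y ^ (d - 1) := by
  have hH0 : 0 ≤ localHeight Y := zero_le_one.trans (one_le_localHeight Y)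
  have hB : 0 ≤ (d : ℝ) * localHeight Y ^ (d - 1) := by positivity
  have : Nonempty (Fin d) := ⟨⟨0, hd⟩⟩
  refine ciSup_le fun i => ciSup_le fun j => ?_
  by_cases hs : Summable fun n : ℕ => ((-1 : ℚ_[p]) ^ (n + 1) * (n : ℚ_[p])⁻¹) • Y ^ n
  · have hij := Pi.hasSum.mp (Pi.hasSum.mp hs.hasSum i) j
    rw [← hij.tsum_eq]
    exact IsUltrametricDist.norm_tsum_le_of_forall_le_of_nonneg hB fun n =>
      norm_log_term_apply_le hd Y hchi n i j
  · rw [tsum_eq_zero_of_not_summable hs]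
    simpa using hB
end

section
/- Let p be a prime and d a positive integer with p > d, and let Y be a d×d matrix over ℚ_p such that every coefficient of the characteristic polynomial χ_Y of degree strictly less than d has p-adic absolute value at most 1/p. Then the sum L = −∑_{n≥1} (−1)ⁿ Yⁿ/n of the logarithm series satisfies the sharper estimate ‖L‖ ≤ H_p(Y)^{d−1}. -/
/-- `Z` is a linear combination of `1, Y, …, Y ^ (d-1)` with all coefficients of absolute value at
most `r`. -/
def SmallComb {p : ℕ} [Fact p.Prime] {d : ℕ} (Y : Matrix (Fin d) (Fin d) ℚ_[p]) (r : ℝ)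
    (Z : Matrix (Fin d) (Fin d) ℚ_[p]) : Prop :=
  ∃ c : ℕ → ℚ_[p], (∀ i, ‖c i‖ ≤ r) ∧ Z = ∑ i ∈ Finset.range d, c i • Y ^ i

namespace SmallComb

variable {p : ℕ} [Fact p.Prime] {d : ℕ} {Y Z W : Matrix (Fin d) (Fin d) ℚ_[p]} {r s : ℝ}

lemma zero (hr : 0 ≤ r) : SmallComb Y r 0 :=
  ⟨0, by simpa using hr, by simp⟩

lemma add (hZ : SmallComb Y r Z) (hW : SmallComb Y r W) : SmallComb Y r (Z + W) := by
  obtain ⟨c, hc, rfl⟩ := hZ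
  obtain ⟨e, he, rfl⟩ := hW
  refine ⟨fun i => c i + e i, fun i => ?_, ?_⟩
  · exact (Padic.nonarchimedean _ _).trans (max_le (hc i) (he i))
  · simp [add_smul, Finset.sum_add_distrib]

lemma smul {a : ℚ_[p]} (ha : ‖a‖ ≤ s) (hZ : SmallComb Y r Z) : SmallComb Y (s * r) (a • Z) := by
  obtain ⟨c, hc, rfl⟩ := hZ
  refine ⟨fun i => a * c i, fun i => ?_, ?_⟩
  · rw [norm_mul]
    exact mul_le_mul ha (hc i) (norm_nonneg _) ((norm_nonneg _).trans ha)
  · simp [Finset.smul_sum, mul_smul]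

lemma sum (hr : 0 ≤ r) (t : Finset ℕ) (F : ℕ → Matrix (Fin d) (Fin d) ℚ_[p])
    (h : ∀ i ∈ t, SmallComb Y r (F i)) : SmallComb Y r (∑ i ∈ t, F i) :=
  Finset.sum_induction F (SmallComb Y r) (fun _ _ => add) (zero hr) h

lemma pow_of_lt {i : ℕ} (hi : i < d) : SmallComb Y 1 (Y ^ i) := by
  refine ⟨fun j => if j = i then 1 else 0, fun j => ?_, ?_⟩
  · dsimp only
    split_ifs <;> simp
  · simp [ite_smul, hi]

/-- Cayley–Hamilton, solved for the top power. -/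
lemma pow_dim_eq (Y : Matrix (Fin d) (Fin d) ℚ_[p]) :
    Y ^ d = ∑ i ∈ Finset.range d, (-Y.charpoly.coeff i) • Y ^ i := by
  have h := Y.aeval_self_charpoly
  have hdeg : Y.charpoly.natDegree = d := by simp
  have hlead : Y.charpoly.coeff d = 1 := by
    have := Y.charpoly_monic.coeff_natDegree
    rwa [hdeg] at this
  rw [Polynomial.aeval_eq_sum_range, hdeg, Finset.sum_range_succ, hlead, one_smul] at h
  rw [eq_neg_of_add_eq_zero_right h]
  simp

lemma mul_self (hchi : ∀ i < d, ‖Y.charpoly.coeff i‖ ≤ 1) (hr : 0 ≤ r)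
    (hZ : SmallComb Y r Z) : SmallComb Y r (Z * Y) := by
  obtain ⟨c, hc, rfl⟩ := hZ
  rw [Finset.sum_mul]
  refine sum hr _ _ fun i hi => ?_
  rw [smul_mul_assoc, ← pow_succ, ← mul_one r]
  refine smul (hc i) ?_
  rcases (Nat.succ_le_of_lt (Finset.mem_range.1 hi)).lt_or_eq with h | h
  · exact pow_of_lt h
  · rw [← Nat.succ_eq_add_one, h, pow_dim_eq]
    refine sum zero_le_one _ _ fun j hj => ?_
    rw [← mul_one (1 : ℝ)]
    exact smul (by simpa using hchi j (Finset.mem_range.1 hj)) (pow_of_lt (Finset.mem_range.1 hj))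

lemma mul_pow_self (hchi : ∀ i < d, ‖Y.charpoly.coeff i‖ ≤ 1) (hr : 0 ≤ r)
    (hZ : SmallComb Y r Z) (m : ℕ) : SmallComb Y r (Z * Y ^ m) := by
  induction m with
  | zero => simpa using hZ
  | succ m ih =>
    rw [pow_succ, ← mul_assoc]
    exact mul_self hchi hr ih

/-- Each factor `Y ^ d` gains a factor `p` in the coefficients. -/
lemma pow (hd : 0 < d) (hchi : ∀ i < d, ‖Y.charpoly.coeff i‖ ≤ (p : ℝ)⁻¹) (n : ℕ) :
    SmallComb Y ((p : ℝ)⁻¹ ^ (n / d)) (Y ^ n) := by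
  have hp1 : (1 : ℝ) ≤ p := by exact_mod_cast (Fact.out : p.Prime).one_lt.le
  have hchi' : ∀ i < d, ‖Y.charpoly.coeff i‖ ≤ 1 :=
    fun i hi => (hchi i hi).trans (inv_le_one_of_one_le₀ hp1)
  have hp0 : ∀ k : ℕ, (0 : ℝ) ≤ (p : ℝ)⁻¹ ^ k := fun k => by positivity
  have key : ∀ k : ℕ, SmallComb Y ((p : ℝ)⁻¹ ^ k) (Y ^ (d * k)) := by
    intro k
    induction k with
    | zero => simpa using pow_of_lt (Y := Y) hd
    | succ k ih =>
      rw [Nat.mul_succ, pow_add Y, pow_dim_eq, Finset.mul_sum]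
      refine sum (hp0 _) _ _ fun i hi => ?_
      rw [mul_smul_comm, pow_succ']
      exact smul (by simpa using hchi i (Finset.mem_range.1 hi))
        (mul_pow_self hchi' (hp0 _) ih i)
  have h := mul_pow_self hchi' (hp0 _) (key (n / d)) (n % d)
  rwa [← pow_add, Nat.div_add_mod] at h

end SmallComb

lemma norm_entry_le_localHeight {p : ℕ} [Fact p.Prime] {d : ℕ}
    (Y : Matrix (Fin d) (Fin d) ℚ_[p]) (i j : Fin d) : ‖Y i j‖ ≤ localHeight Y :=
  ((le_ciSup (f := fun j => ‖Y i j‖) (Set.finite_range _).bddAbove j).trans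
    (le_ciSup (f := fun i => ⨆ j, ‖Y i j‖) (Set.finite_range _).bddAbove i)).trans
    (le_max_right _ _)

lemma norm_pow_entry_le {p : ℕ} [Fact p.Prime] {d : ℕ}
    (Y : Matrix (Fin d) (Fin d) ℚ_[p]) (m : ℕ) (i j : Fin d) :
    ‖(Y ^ m) i j‖ ≤ localHeight Y ^ m := by
  have hH : 0 ≤ localHeight Y := zero_le_one.trans (le_max_left _ _)
  induction m generalizing i j with
  | zero =>
    rw [pow_zero, pow_zero, Matrix.one_apply]
    split_ifs <;> simp
  | succ m ih =>
    rw [pow_succ, Matrix.mul_apply]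
    refine IsUltrametricDist.norm_sum_le_of_forall_le_of_nonneg (pow_nonneg hH _) fun k _ => ?_
    rw [norm_mul, pow_succ]
    exact mul_le_mul (ih i k) (norm_entry_le_localHeight Y k j) (norm_nonneg _) (pow_nonneg hH _)

lemma padicValNat_le_div {p d n : ℕ} (hd : 0 < d) (hpd : d < p) (hn : n ≠ 0) :
    padicValNat p n ≤ n / d := by
  rw [Nat.le_div_iff_mul_le hd]
  have hle : p ^ padicValNat p n ≤ n := Nat.le_of_dvd (Nat.pos_of_ne_zero hn) pow_padicValNat_dvd
  rcases hv : padicValNat p n with _ | v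
  · simp
  · rw [hv] at hle
    have h1 : v + 1 ≤ p ^ v := Nat.lt_pow_self (by omega)
    calc (v + 1) * d ≤ p ^ v * p := Nat.mul_le_mul h1 hpd.le
      _ = p ^ (v + 1) := (pow_succ _ _).symm
      _ ≤ n := hle

lemma norm_log_term_entry_le {p : ℕ} [Fact p.Prime] {d : ℕ} (hd : 0 < d) (hpd : d < p)
    (Y : Matrix (Fin d) (Fin d) ℚ_[p])
    (hchi : ∀ i < d, ‖Y.charpoly.coeff i‖ ≤ (p : ℝ)⁻¹) (n : ℕ) (i j : Fin d) :
    ‖(((-1 : ℚ_[p]) ^ (n + 1) * (n : ℚ_[p])⁻¹) • Y ^ n) i j‖ ≤ localHeight Y ^ (d - 1) := by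
  have hH1 : 1 ≤ localHeight Y := le_max_left _ _
  have hH0 : 0 ≤ localHeight Y := zero_le_one.trans hH1
  rcases eq_or_ne n 0 with rfl | hn
  · simpa using pow_nonneg hH0 _
  have hp1 : (1 : ℝ) ≤ p := by exact_mod_cast (Fact.out : p.Prime).one_lt.le
  have hp0 : (0 : ℝ) < p := zero_lt_one.trans_le hp1
  have hinv : ‖(-1 : ℚ_[p]) ^ (n + 1) * (n : ℚ_[p])⁻¹‖ ≤ (p : ℝ) ^ (n / d) := by
    have hnn : ‖(n : ℚ_[p])‖ = ((p : ℝ) ^ padicValNat p n)⁻¹ := by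
      rw [Padic.norm_eq_zpow_neg_valuation (by exact_mod_cast hn), Padic.valuation_natCast,
        zpow_neg, zpow_natCast]
    rw [norm_mul, norm_pow, norm_neg, norm_one, one_pow, one_mul, norm_inv, hnn, inv_inv]
    exact pow_le_pow_right₀ hp1 (padicValNat_le_div hd hpd hn)
  obtain ⟨c, hc, hsum⟩ := SmallComb.smul hinv (SmallComb.pow hd hchi n)
  rw [← mul_pow, mul_inv_cancel₀ hp0.ne', one_pow] at hc
  rw [hsum, Matrix.sum_apply]
  refine IsUltrametricDist.norm_sum_le_of_forall_le_of_nonneg (pow_nonneg hH0 _) fun k hk => ?_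
  rw [Matrix.smul_apply, smul_eq_mul, norm_mul]
  calc ‖c k‖ * ‖(Y ^ k) i j‖ ≤ 1 * localHeight Y ^ k :=
        mul_le_mul (hc k) (norm_pow_entry_le Y k i j) (norm_nonneg _) zero_le_one
    _ ≤ localHeight Y ^ (d - 1) := by
        rw [one_mul]
        exact pow_le_pow_right₀ hH1 (Nat.le_sub_one_of_lt (Finset.mem_range.1 hk))

/-- Let `p` be a prime and `d` a positive integer with `p > d`, and let `Y` be
a `d × d` matrix over `ℚ_p` such that every coefficient of the characteristic polynomial of `Y`
of degree strictly less than `d` has `p`-adic absolute value at most `1/p`. Then the sum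
`L = -∑_{n ≥ 1} (-1)ⁿ Yⁿ / n` of the logarithm series satisfies the sharper estimate
`‖L‖ ≤ H_p(Y) ^ (d - 1)`. -/
theorem stmt_3 (p : ℕ) [Fact p.Prime] (d : ℕ) (hd : 0 < d) (hpd : d < p)
    (Y : Matrix (Fin d) (Fin d) ℚ_[p])
    (hchi : ∀ i < d, ‖Y.charpoly.coeff i‖ ≤ (p : ℝ)⁻¹) :
    matNorm (∑' n : ℕ, ((-1 : ℚ_[p]) ^ (n + 1) * (n : ℚ_[p])⁻¹) • Y ^ n)
      ≤ localHeight Y ^ (d - 1) := by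
  have hB : 0 ≤ localHeight Y ^ (d - 1) := pow_nonneg (zero_le_one.trans (le_max_left _ _)) _
  refine Real.iSup_le (fun i => Real.iSup_le (fun j => ?_) hB) hB
  by_cases hs : Summable fun n : ℕ => ((-1 : ℚ_[p]) ^ (n + 1) * (n : ℚ_[p])⁻¹) • Y ^ n
  · have hcont : Continuous fun Z : Matrix (Fin d) (Fin d) ℚ_[p] => ‖Z i j‖ :=
      (continuous_id.matrix_elem i j).norm
    refine le_of_tendsto' ((hcont.tendsto _).comp hs.hasSum) fun t => ?_
    simp only [Function.comp_apply, Matrix.sum_apply]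
    exact IsUltrametricDist.norm_sum_le_of_forall_le_of_nonneg hB
      fun n _ => norm_log_term_entry_le hd hpd Y hchi n i j
  -- The series does converge, but this is not needed: a divergent `tsum` is `0` by convention.
  · rw [tsum_eq_zero_of_not_summable hs]
    simpa using hB
end

section
/- Let p be a prime and d a positive integer, and let Y be a d×d matrix over ℚ_p such that every coefficient of the characteristic polynomial χ_Y of degree strictly less than d has p-adic absolute value at most 1/p. Let A be the ℤ_p-submodule of M_d(ℚ_p) spanned by 1, Y, Y², …, Y^{d−1} (M_d(ℚ_p) being regarded as a module over the ring ℤ_p of p-adic integers). Then Y·A ⊆ A, Y^d ∈ p·A, and more generally Yⁿ ∈ p^{⌊n/d⌋}·A for every n ≥ 0. -/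
/-!
By Cayley–Hamilton, `Y ^ d` is minus the sum of the `c_i • Y ^ i` with `i < d`, where the `c_i`
are the lower coefficients of the characteristic polynomial. Since `‖c_i‖ ≤ 1/p`, each `c_i` is
`p` times a `p`-adic integer, so `Y ^ d = p • a₀` with `a₀ ∈ A`. Hence `A` is stable under
multiplication by `Y`, and therefore a subring. Writing `n = d q + r` with `r < d` gives
`Y ^ n = p ^ q • (a₀ ^ q * Y ^ r)`, and `a₀ ^ q * Y ^ r ∈ A`.
-/

/-- Let `p` be a prime and `d` a positive integer, and let `Y` be a `d × d`
matrix over `ℚ_p` such that every coefficient of the characteristic polynomial of `Y` of degree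
strictly less than `d` has `p`-adic absolute value at most `1/p`. Let `A` be the
`ℤ_p`-submodule of `M_d(ℚ_p)` spanned by `1, Y, Y², …, Y^{d-1}`. Then `Y • A ⊆ A`
(matrix multiplication), `Y ^ d ∈ p • A`, and more generally `Y ^ n ∈ p ^ ⌊n/d⌋ • A`
for every `n ≥ 0`. -/
theorem stmt_6 (p : ℕ) [Fact p.Prime] (d : ℕ) (hd : 0 < d)
    (Y : Matrix (Fin d) (Fin d) ℚ_[p])
    (hchi : ∀ i < d, ‖Y.charpoly.coeff i‖ ≤ (p : ℝ)⁻¹)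
    (A : Submodule ℤ_[p] (Matrix (Fin d) (Fin d) ℚ_[p]))
    (hA : A = Submodule.span ℤ_[p] (Set.range fun i : Fin d => Y ^ (i : ℕ))) :
    (∀ a ∈ A, Y * a ∈ A) ∧
      (∃ a ∈ A, Y ^ d = (p : ℤ_[p]) • a) ∧
      (∀ n : ℕ, ∃ a ∈ A, Y ^ n = ((p : ℤ_[p]) ^ (n / d)) • a) := by
  have hpow : ∀ i < d, Y ^ i ∈ A := fun i hi => by
    rw [hA]; exact Submodule.subset_span ⟨⟨i, hi⟩, rfl⟩
  have hc : ∀ i : Fin d, ∃ b : ℤ_[p], -Y.charpoly.coeff i = ((p : ℤ_[p]) * b : ℤ_[p]) := by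
    intro i
    have hp0 : (p : ℚ_[p]) ≠ 0 := by exact_mod_cast (Fact.out : p.Prime).ne_zero
    have hle : ‖-Y.charpoly.coeff i / p‖ ≤ 1 := by
      rw [norm_div, norm_neg, Padic.norm_p]
      exact div_le_one_of_le₀ (hchi i i.2) (by positivity)
    obtain ⟨z, hz⟩ : ∃ z : ℤ_[p], (z : ℚ_[p]) = -Y.charpoly.coeff i / p := ⟨⟨_, hle⟩, rfl⟩
    refine ⟨z, ?_⟩
    rw [PadicInt.coe_mul, PadicInt.coe_natCast, hz, mul_div_cancel₀ _ hp0]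
  choose b hb using hc
  have hCH : Y ^ d = (p : ℤ_[p]) • ∑ i : Fin d, b i • Y ^ (i : ℕ) := by
    have h := Matrix.aeval_self_charpoly Y
    have hdeg : Y.charpoly.natDegree = d := by simp [Matrix.charpoly_natDegree_eq_dim]
    have hlead : Y.charpoly.coeff d = 1 := by
      have := (Matrix.charpoly_monic Y).coeff_natDegree
      rwa [hdeg] at this
    rw [Polynomial.aeval_eq_sum_range, hdeg, Finset.sum_range_succ, hlead, one_smul,
      Finset.sum_range] at h
    rw [eq_neg_of_add_eq_zero_right h, Finset.smul_sum, ← Finset.sum_neg_distrib]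
    refine Finset.sum_congr rfl fun i _ => ?_
    rw [← neg_smul, hb i, smul_smul]
    -- The `ℤ_p`-action on matrices is the `ℚ_p`-action through the coercion.
    rfl
  set a₀ := ∑ i : Fin d, b i • Y ^ (i : ℕ) with ha₀
  have ha₀A : a₀ ∈ A := Submodule.sum_mem _ fun i _ => A.smul_mem _ (hpow i i.2)
  have hY : ∀ a ∈ A, Y * a ∈ A := by
    intro a ha
    rw [hA] at ha
    induction ha using Submodule.span_induction with
    | mem x hx =>
      obtain ⟨i, rfl⟩ := hx
      simp only [← pow_succ']
      rcases (Nat.succ_le_of_lt i.2).lt_or_eq with h | h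
      · exact hpow _ h
      · have hid : (i : ℕ) + 1 = d := h
        rw [hid, hCH]
        exact A.smul_mem _ ha₀A
    | zero => simp
    | add x y _ _ hx hy => rw [mul_add]; exact A.add_mem hx hy
    | smul c x _ hx => rw [mul_smul_comm]; exact A.smul_mem _ hx
  have hYpow : ∀ (k : ℕ), ∀ a ∈ A, Y ^ k * a ∈ A := by
    intro k
    induction k with
    | zero => simp
    | succ k ih => intro a ha; rw [pow_succ', mul_assoc]; exact hY _ (ih a ha)
  have hmul : ∀ a ∈ A, ∀ c ∈ A, a * c ∈ A := by
    intro a ha c hcA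
    rw [hA] at ha
    induction ha using Submodule.span_induction with
    | mem x hx => obtain ⟨i, rfl⟩ := hx; exact hYpow _ c hcA
    | zero => simp
    | add x y _ _ hx hy => rw [add_mul]; exact A.add_mem hx hy
    | smul r x _ hx => rw [smul_mul_assoc]; exact A.smul_mem _ hx
  have ha₀pow : ∀ k : ℕ, a₀ ^ k ∈ A := by
    intro k
    induction k with
    | zero => simpa using hpow 0 hd
    | succ k ih => rw [pow_succ]; exact hmul _ ih _ ha₀A
  refine ⟨hY, ⟨a₀, ha₀A, hCH⟩, fun n =>
    ⟨a₀ ^ (n / d) * Y ^ (n % d), hmul _ (ha₀pow _) _ (hpow _ (Nat.mod_lt _ hd)), ?_⟩⟩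
  conv_lhs => rw [← Nat.div_add_mod n d, pow_add, pow_mul, hCH, smul_pow, smul_mul_assoc]
end

section
/- Let p be a prime, d a positive integer, and Z a d×d matrix over ℚ_p such that the exponential series exp(Z) = ∑_{n≥0} Zⁿ/n! converges (the family Zⁿ/n!, n ≥ 0, is summable in M_d(ℚ_p)). Write exp(Z) = 1 + Y. Then the logarithm series log(1+Y) = −∑_{n≥1} (−1)ⁿ Yⁿ/n converges and its sum equals Z. -/
/-!
The proof expands `log (exp Z)` as a double series in powers of `Z` and sums it in both orders.

Growth of `Zⁿ`. Let `r = p ^ (-1/(p-1))`. Legendre's formula gives `|n!| = r ^ (n - s(n))`, where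
`s(n)` is the sum of the base-`p` digits of `n`; so `|n!| ≥ r ^ n`, and `|n!| = r ^ (n - 1)` when
`n` is a power of `p`. As `Zⁿ / n! → 0`, some `m = p ^ k` satisfies `‖Z ^ m‖ < r ^ m`, and
submultiplicativity of the norm turns this into a geometric bound `‖Zⁿ‖ / |n!| ≤ K τⁿ` with
`τ < 1` (`exists_geometric_bound`).

Coefficients. One has `(exp X - 1) ^ m = ∑ₙ c(m,n) Xⁿ / n!` where `c(m,n)` (`surjCount`) counts
surjections from an `n`-element set onto an `m`-element set. These are integers, divisible by `m`
when `m ≥ 1` and zero when `m > n`. Hence the term `± (c(m,n) / m) Zⁿ / n!` of the double series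
has norm at most `‖Zⁿ‖ / |n!|` and vanishes for `m > n`, so the double series is absolutely
summable. Summing over `n` first gives the logarithm series of `1 + Y`; summing over `m` first
gives a telescoping sum, which leaves only `Z`.
-/

open Filter Topology

/-- The number of surjections from an `n`-element set onto an `m`-element set, that is,
`m! * S(n, m)` with `S` the Stirling numbers of the second kind. The recursion is the one satisfied
by `n!` times the `n`-th coefficient of `(exp X - 1) ^ m`. -/
def surjCount : ℕ → ℕ → ℕ
  | 0, 0 => 1
  | 0, _ + 1 => 0
  | _ + 1, 0 => 0
  | m + 1, n + 1 => (m + 1) * (surjCount (m + 1) n + surjCount m n)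

lemma surjCount_eq_zero : ∀ (n m : ℕ), n < m → surjCount m n = 0
  | _, 0, h => by omega
  | 0, m + 1, _ => by simp [surjCount]
  | n + 1, m + 1, h => by
    rw [surjCount, surjCount_eq_zero n (m + 1) (by omega), surjCount_eq_zero n m (by omega), add_zero, mul_zero]

lemma dvd_surjCount (m n : ℕ) : m + 1 ∣ surjCount (m + 1) n := by
  cases n with
  | zero => simp [surjCount]
  | succ n => rw [surjCount]; exact dvd_mul_right _ _

/-- The recursion for `surjCount` comes from `D (E ^ (m+1)) = (m+1) (E ^ (m+1) + E ^ m)` with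
`E = exp X - 1`. -/
lemma coeff_exp_sub_one_pow (K : Type*) [Field K] [CharZero K] (n : ℕ) : ∀ m : ℕ,
    PowerSeries.coeff n ((PowerSeries.exp K - 1) ^ m) =
      (surjCount m n : K) * ((n.factorial : K))⁻¹ := by
  induction n with
  | zero =>
    intro m
    cases m <;> simp [surjCount]
  | succ n ih =>
    intro m
    cases m with
    | zero => simp [surjCount, PowerSeries.coeff_one]
    | succ m =>
      have hder : PowerSeries.derivative K ((PowerSeries.exp K - 1) ^ (m + 1)) =
          ((m + 1 : ℕ) : PowerSeries K) *
            ((PowerSeries.exp K - 1) ^ (m + 1) + (PowerSeries.exp K - 1) ^ m) := by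
        rw [PowerSeries.derivative_pow, map_sub, PowerSeries.derivative_exp]
        simp
        ring
      have h := congrArg (PowerSeries.coeff n) hder
      rw [PowerSeries.coeff_derivative, ← nsmul_eq_mul, map_nsmul, map_add, ih, ih,
        nsmul_eq_mul] at h
      have hn : (n : K) + 1 ≠ 0 := by exact_mod_cast Nat.succ_ne_zero n
      have hf : (n.factorial : K) ≠ 0 := by exact_mod_cast n.factorial_ne_zero
      rw [eq_div_of_mul_eq hn h, surjCount, Nat.factorial_succ]
      push_cast
      field_simp

/-- The coefficientwise identity `log (exp X) = X`. The division by `m` cancels the factor `m` in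
the recursion for `surjCount`, and the sum telescopes. -/
lemma sum_surjCount (K : Type*) [Field K] [CharZero K] (n : ℕ) :
    ∑ m ∈ Finset.range (n + 1), ((-1 : K) ^ (m + 1) * (m : K)⁻¹) * (surjCount m n : K) =
      if n = 1 then 1 else 0 := by
  cases n with
  | zero => simp
  | succ n =>
    rw [Finset.sum_range_succ']
    have : ∀ m ∈ Finset.range (n + 1),
        ((-1 : K) ^ (m + 1 + 1) * ((m + 1 : ℕ) : K)⁻¹) * (surjCount (m + 1) (n + 1) : K) =
        (-1) ^ m * (surjCount m n : K) - (-1) ^ (m + 1) * (surjCount (m + 1) n : K) := by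
      intro m _
      have hm : (m : K) + 1 ≠ 0 := by exact_mod_cast Nat.succ_ne_zero m
      rw [surjCount]
      push_cast
      field_simp
      ring
    rw [Finset.sum_congr rfl this,
      Finset.sum_range_sub' (fun m => (-1 : K) ^ m * (surjCount m n : K)),
      surjCount_eq_zero n (n + 1) (by omega)]
    cases n <;> simp [surjCount]

/-- Legendre's formula in multiplicative form, with `r = p ^ (-1/(p-1))`. -/
lemma norm_factorial_eq (p : ℕ) [Fact p.Prime] {r : ℝ} (hr : r ^ (p - 1) = (p : ℝ)⁻¹) (n : ℕ) :
    ‖(n.factorial : ℚ_[p])‖ = r ^ (n - (p.digits n).sum) := by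
  have h0 : (n.factorial : ℚ_[p]) ≠ 0 := by exact_mod_cast n.factorial_ne_zero
  rw [Padic.norm_eq_zpow_neg_valuation h0, Padic.valuation_natCast,
    ← sub_one_mul_padicValNat_factorial, pow_mul, hr, zpow_neg, zpow_natCast, inv_pow]

/-- A submultiplicative sequence that drops below `1` at some positive index decays
geometrically. -/
lemma exists_bound_of_submul {v : ℕ → ℝ} (h0 : ∀ n, 0 ≤ v n)
    (hv : ∀ a b, v (a + b) ≤ v a * v b) {m : ℕ} (hm : 0 < m) (hlt : v m < 1) :
    ∃ K τ : ℝ, 0 < τ ∧ τ < 1 ∧ 0 ≤ K ∧ ∀ n, v n ≤ K * τ ^ n := by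
  -- `τ` is an `m`-th root of a number in `(0, 1)` that bounds `v m`.
  obtain ⟨τ, hτ0, hτ1, hτ⟩ : ∃ τ : ℝ, 0 < τ ∧ τ < 1 ∧ v m ≤ τ ^ m := by
    have hpos : (0 : ℝ) < max (v m) (1 / 2) := by positivity
    have hroot := Real.rpow_inv_natCast_pow hpos.le hm.ne'
    refine ⟨(max (v m) (1 / 2)) ^ ((m : ℝ)⁻¹), by positivity, ?_, (le_max_left _ _).trans_eq hroot.symm⟩
    exact Real.rpow_lt_one hpos.le (max_lt hlt (by norm_num)) (by positivity)
  refine ⟨∑ b ∈ Finset.range m, v b * (τ ^ b)⁻¹, τ, hτ0, hτ1,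
    Finset.sum_nonneg fun b _ => mul_nonneg (h0 b) (by positivity), fun n => ?_⟩
  induction n using Nat.strong_induction_on with
  | _ n ih =>
    by_cases hn : n < m
    · rw [← div_le_iff₀ (by positivity), div_eq_mul_inv]
      exact Finset.single_le_sum (f := fun b => v b * (τ ^ b)⁻¹)
        (fun b _ => mul_nonneg (h0 b) (by positivity)) (Finset.mem_range.2 hn)
    · obtain ⟨k, rfl⟩ := Nat.exists_eq_add_of_le' (not_lt.1 hn)
      refine (hv k m).trans ?_
      rw [pow_add, ← mul_assoc]
      exact mul_le_mul (ih k (by omega)) hτ (h0 m) ((h0 k).trans (ih k (by omega)))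

section NormedAlgebra

variable {p : ℕ} [Fact p.Prime] {A : Type*} [NormedRing A] [NormedAlgebra ℚ_[p] A]

/-- Convergence of the exponential series at `Z` forces geometric decay of its terms. The ratio is
written as a square for use in the two-variable bound of the double series. -/
lemma exists_geometric_bound {Z : A}
    (hconv : Summable fun n : ℕ => ((n.factorial : ℚ_[p]))⁻¹ • Z ^ n) :
    ∃ K s : ℝ, 0 ≤ s ∧ s < 1 ∧ 0 ≤ K ∧
      ∀ n : ℕ, ‖((n.factorial : ℚ_[p]))⁻¹‖ * ‖Z ^ n‖ ≤ K * (s * s) ^ n := by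
  have hp : p.Prime := Fact.out
  have hp1 : p - 1 ≠ 0 := by have := hp.two_le; omega
  have hp0 : (0 : ℝ) < (p : ℝ)⁻¹ := by have := hp.pos; positivity
  have hple : (p : ℝ)⁻¹ < 1 := inv_lt_one_of_one_lt₀ (by exact_mod_cast hp.one_lt)
  obtain ⟨r, hr0, hr1, hr⟩ : ∃ r : ℝ, 0 < r ∧ r < 1 ∧ r ^ (p - 1) = (p : ℝ)⁻¹ :=
    ⟨((p : ℝ)⁻¹) ^ (((p - 1 : ℕ) : ℝ)⁻¹), by positivity,
      Real.rpow_lt_one hp0.le hple (by have := Nat.pos_of_ne_zero hp1; positivity),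
      Real.rpow_inv_natCast_pow hp0.le hp1⟩
  -- Along the powers of `p` the term `Zⁿ / n!` has norm `r * (‖Zⁿ‖ / r ^ n)`.
  obtain ⟨m, hm, hlt⟩ : ∃ m : ℕ, 0 < m ∧ ‖Z ^ m‖ / r ^ m < 1 := by
    have ht : Tendsto (fun k : ℕ => ‖(((p ^ k).factorial : ℚ_[p]))⁻¹ • Z ^ (p ^ k)‖)
        atTop (𝓝 0) := by
      have h1 := hconv.tendsto_atTop_zero.norm
      rw [norm_zero] at h1
      exact h1.comp (tendsto_pow_atTop_atTop_of_one_lt hp.one_lt)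
    obtain ⟨k, hk⟩ := (ht.eventually (gt_mem_nhds hr0)).exists
    refine ⟨p ^ k, pow_pos hp.pos k, ?_⟩
    have hdig : (p.digits (p ^ k)).sum = 1 := by
      have h := Nat.digits_base_pow_mul (k := k) hp.one_lt one_pos
      rw [mul_one] at h
      rw [h, Nat.digits_of_lt p 1 one_ne_zero hp.one_lt]
      simp
    rw [norm_smul, norm_inv, norm_factorial_eq p hr, hdig] at hk
    have hpk : 0 < p ^ k := pow_pos hp.pos k
    generalize p ^ k = m at hk hpk
    obtain ⟨m, rfl⟩ := Nat.exists_eq_succ_of_ne_zero hpk.ne'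
    rw [Nat.succ_sub_one, inv_mul_lt_iff₀ (by positivity)] at hk
    rwa [div_lt_one (by positivity), Nat.succ_eq_add_one, pow_succ r]
  obtain ⟨K, τ, hτ0, hτ1, hK, hb⟩ := exists_bound_of_submul (v := fun n => ‖Z ^ n‖ / r ^ n)
    (fun n => by positivity)
    (fun a b => by
      rw [pow_add, pow_add, div_mul_div_comm]
      gcongr
      exact norm_mul_le _ _) hm hlt
  refine ⟨K, √τ, by positivity, (Real.sqrt_lt' one_pos).2 (by simpa using hτ1), hK, fun n => ?_⟩
  rw [Real.mul_self_sqrt hτ0.le]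
  refine le_trans ?_ (hb n)
  rw [norm_inv, norm_factorial_eq p hr, inv_mul_eq_div]
  exact div_le_div_of_nonneg_left (norm_nonneg _) (by positivity)
    (pow_le_pow_of_le_one hr0.le hr1.le (Nat.sub_le _ _))

/-- Evaluation at `Z` of the power series identity
`(exp X - 1) ^ m = ∑ₙ surjCount m n * Xⁿ / n!`, by repeated Cauchy products. -/
lemma hasSum_exp_sub_one_pow [CompleteSpace A] {Z Y : A}
    (habs : Summable fun n : ℕ => ‖((n.factorial : ℚ_[p]))⁻¹‖ * ‖Z ^ n‖)
    (hY : 1 + Y = ∑' n : ℕ, ((n.factorial : ℚ_[p]))⁻¹ • Z ^ n) (m : ℕ) :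
    HasSum (fun n : ℕ => ((surjCount m n : ℚ_[p]) * ((n.factorial : ℚ_[p]))⁻¹) • Z ^ n)
      (Y ^ m) := by
  have hnorm : ∀ m, Summable fun n : ℕ =>
      ‖((surjCount m n : ℚ_[p]) * ((n.factorial : ℚ_[p]))⁻¹) • Z ^ n‖ := by
    intro m
    refine Summable.of_nonneg_of_le (fun _ => norm_nonneg _) (fun n => ?_) habs
    rw [norm_smul, norm_mul]
    have h1 : ‖(surjCount m n : ℚ_[p])‖ ≤ 1 := by
      simpa using Padic.norm_int_le_one (p := p) (surjCount m n : ℤ)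
    gcongr
    exact mul_le_of_le_one_left (norm_nonneg _) h1
  have hexp : HasSum (fun n : ℕ => ((n.factorial : ℚ_[p]))⁻¹ • Z ^ n) (1 + Y) := by
    rw [hY]
    exact (Summable.of_norm (by simpa only [norm_smul] using habs)).hasSum
  have hone : ∑' n : ℕ, ((surjCount 1 n : ℚ_[p]) * ((n.factorial : ℚ_[p]))⁻¹) • Z ^ n = Y := by
    have h := hexp.sub (hasSum_ite_eq 0 (1 : A))
    rw [add_sub_cancel_left] at h
    rw [← h.tsum_eq]
    refine tsum_congr fun n => ?_
    rw [← coeff_exp_sub_one_pow]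
    cases n <;> simp [PowerSeries.coeff_exp, PowerSeries.coeff_one]
  induction m with
  | zero =>
    rw [pow_zero]
    convert hasSum_ite_eq 0 (1 : A) using 2 with n
    cases n <;> simp [surjCount]
  | succ m ih =>
    have hprod := tsum_mul_tsum_eq_tsum_sum_antidiagonal_of_summable_norm (hnorm m) (hnorm 1)
    rw [ih.tsum_eq, hone, ← pow_succ] at hprod
    rw [hprod]
    have hterm : ∀ n : ℕ, ∑ kl ∈ Finset.HasAntidiagonal.antidiagonal n,
        (((surjCount m kl.1 : ℚ_[p]) * ((kl.1.factorial : ℚ_[p]))⁻¹) • Z ^ kl.1) *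
          (((surjCount 1 kl.2 : ℚ_[p]) * ((kl.2.factorial : ℚ_[p]))⁻¹) • Z ^ kl.2) =
        ((surjCount (m + 1) n : ℚ_[p]) * ((n.factorial : ℚ_[p]))⁻¹) • Z ^ n := by
      intro n
      rw [← coeff_exp_sub_one_pow, pow_succ, PowerSeries.coeff_mul, Finset.sum_smul]
      refine Finset.sum_congr rfl fun kl hkl => ?_
      rw [← coeff_exp_sub_one_pow, ← coeff_exp_sub_one_pow, smul_mul_smul_comm, ← pow_add,
        Finset.HasAntidiagonal.mem_antidiagonal.1 hkl, pow_one]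
    simp_rw [hterm]
    exact (hnorm (m + 1)).of_norm.hasSum

/-- `log (exp Z) = Z` in a complete normed `ℚ_[p]`-algebra, whenever the exponential series
converges at `Z`. -/
lemma hasSum_log_exp [CompleteSpace A] {Z Y : A}
    (hconv : Summable fun n : ℕ => ((n.factorial : ℚ_[p]))⁻¹ • Z ^ n)
    (hY : 1 + Y = ∑' n : ℕ, ((n.factorial : ℚ_[p]))⁻¹ • Z ^ n) :
    HasSum (fun n : ℕ => ((-1 : ℚ_[p]) ^ (n + 1) * (n : ℚ_[p])⁻¹) • Y ^ n) Z := by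
  obtain ⟨K, s, hs0, hs1, hK, hb⟩ := exists_geometric_bound hconv
  have habs : Summable fun n : ℕ => ‖((n.factorial : ℚ_[p]))⁻¹‖ * ‖Z ^ n‖ :=
    Summable.of_nonneg_of_le (fun _ => by positivity) hb
      ((summable_geometric_of_lt_one (by positivity) (by nlinarith)).mul_left K)
  let f : ℕ × ℕ → A := fun x =>
    ((-1 : ℚ_[p]) ^ (x.1 + 1) * (x.1 : ℚ_[p])⁻¹) •
      (((surjCount x.1 x.2 : ℚ_[p]) * ((x.2.factorial : ℚ_[p]))⁻¹) • Z ^ x.2)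
  have hf : Summable f := by
    have hgeo := summable_geometric_of_lt_one hs0 hs1
    have hg : Summable fun x : ℕ × ℕ => K * (s ^ x.1 * s ^ x.2) :=
      (hgeo.mul_of_nonneg hgeo (fun _ => by positivity) (fun _ => by positivity)).mul_left K
    refine Summable.of_norm_bounded hg ?_
    rintro ⟨m, n⟩
    by_cases hmn : n < m
    · simp only [f, surjCount_eq_zero n m hmn]
      simp only [Nat.cast_zero, zero_mul, zero_smul, smul_zero, norm_zero]
      positivity
    · -- The quotient `surjCount m n / m` is an integer (with value `0` for `m = 0`).
      have hc : ‖((-1 : ℚ_[p]) ^ (m + 1) * (m : ℚ_[p])⁻¹) * (surjCount m n : ℚ_[p])‖ ≤ 1 := by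
        cases m with
        | zero => simp
        | succ m =>
          obtain ⟨k, hk⟩ := dvd_surjCount m n
          have hm : ((m + 1 : ℕ) : ℚ_[p]) ≠ 0 := by exact_mod_cast Nat.succ_ne_zero m
          rw [hk, Nat.cast_mul, mul_assoc, inv_mul_cancel_left₀ hm, norm_mul, norm_pow, norm_neg,
            norm_one, one_pow, one_mul]
          simpa using Padic.norm_int_le_one (p := p) (k : ℤ)
      calc ‖f (m, n)‖
          = ‖((-1 : ℚ_[p]) ^ (m + 1) * (m : ℚ_[p])⁻¹) * (surjCount m n : ℚ_[p])‖ *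
              (‖((n.factorial : ℚ_[p]))⁻¹‖ * ‖Z ^ n‖) := by
            simp only [f, smul_smul, norm_smul, norm_mul]
            ring
        _ ≤ ‖((n.factorial : ℚ_[p]))⁻¹‖ * ‖Z ^ n‖ :=
            mul_le_of_le_one_left (by positivity) hc
        _ ≤ K * (s * s) ^ n := hb n
        _ ≤ K * (s ^ m * s ^ n) := by
            rw [mul_pow]
            have := pow_le_pow_of_le_one hs0 hs1.le (not_lt.1 hmn)
            gcongr
  have hrow := hf.hasSum.prod_fiberwise fun m =>
    (hasSum_exp_sub_one_pow habs hY m).const_smul ((-1 : ℚ_[p]) ^ (m + 1) * (m : ℚ_[p])⁻¹)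
  have hcol : HasSum (fun n : ℕ => if n = 1 then Z else 0) (∑' x, f x) := by
    refine HasSum.prod_fiberwise (f := fun x : ℕ × ℕ => f x.swap)
      ((Equiv.prodComm ℕ ℕ).hasSum_iff.2 hf.hasSum) fun n => ?_
    have hfin : HasSum (fun m => f (m, n)) (∑ m ∈ Finset.range (n + 1), f (m, n)) := by
      refine hasSum_sum_of_ne_finset_zero fun m hm => ?_
      simp only [f, surjCount_eq_zero n m (by simpa [Nat.lt_succ_iff] using hm)]
      simp
    suffices h : ∑ m ∈ Finset.range (n + 1), f (m, n) = if n = 1 then Z else 0 from h ▸ hfin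
    have : ∀ m, f (m, n) = (((-1 : ℚ_[p]) ^ (m + 1) * (m : ℚ_[p])⁻¹) * (surjCount m n : ℚ_[p])) •
        (((n.factorial : ℚ_[p]))⁻¹ • Z ^ n) := by
      intro m
      simp only [f, smul_smul, mul_assoc]
    simp_rw [this]
    rw [← Finset.sum_smul, sum_surjCount]
    split_ifs with h
    · simp [h]
    · simp
  rwa [hcol.unique (hasSum_ite_eq 1 Z)] at hrow

end NormedAlgebra

/-- Let `p` be a prime, `d` a positive integer, and `Z` a `d × d` matrix over
`ℚ_p` such that the exponential series `exp(Z) = ∑_{n ≥ 0} Zⁿ / n!` converges (the family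
`Zⁿ / n!`, `n ≥ 0`, is summable in `M_d(ℚ_p)`). Write `exp(Z) = 1 + Y`. Then the logarithm
series `log(1+Y) = -∑_{n ≥ 1} (-1)ⁿ Yⁿ / n` converges and its sum equals `Z`. -/
theorem stmt_7 (p : ℕ) [Fact p.Prime] (d : ℕ) (hd : 0 < d)
    (Z : Matrix (Fin d) (Fin d) ℚ_[p])
    (hconv : Summable fun n : ℕ => ((n.factorial : ℚ_[p]))⁻¹ • Z ^ n)
    (Y : Matrix (Fin d) (Fin d) ℚ_[p])
    (hY : (1 : Matrix (Fin d) (Fin d) ℚ_[p]) + Y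
        = ∑' n : ℕ, ((n.factorial : ℚ_[p]))⁻¹ • Z ^ n) :
    (Summable fun n : ℕ => ((-1 : ℚ_[p]) ^ (n + 1) * (n : ℚ_[p])⁻¹) • Y ^ n) ∧
      (∑' n : ℕ, ((-1 : ℚ_[p]) ^ (n + 1) * (n : ℚ_[p])⁻¹) • Y ^ n) = Z := by
  -- The `ℓ^∞` operator norm makes the matrices a normed algebra with the entrywise topology.
  let _ := Matrix.linftyOpNormedRing (n := Fin d) (α := ℚ_[p])
  let _ := Matrix.linftyOpNormedAlgebra (n := Fin d) (R := ℚ_[p]) (α := ℚ_[p])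
  have : @CompleteSpace (Matrix (Fin d) (Fin d) ℚ_[p]) PseudoMetricSpace.toUniformSpace :=
    FiniteDimensional.complete ℚ_[p] _
  have h := hasSum_log_exp hconv hY
  exact ⟨h.summable, h.tsum_eq⟩
end

section
/- Let p be a prime, d and k positive integers, and X a d×d matrix over ℚ_p such that every coefficient of the characteristic polynomial χ_X of degree strictly less than d has p-adic absolute value at most p^{−k}, and such that d < k(p−1). Then the exponential series exp(X) = ∑_{n≥0} Xⁿ/n! converges, i.e. the family Xⁿ/n!, n ≥ 0, is summable in M_d(ℚ_p). -/
/-!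
The characteristic polynomial gives, by Cayley–Hamilton, the recurrence
`Xⁿ = -∑_{i<d} cᵢ Xⁿ⁻ᵈ⁺ⁱ` with `‖cᵢ‖ ≤ p⁻ᵏ`. By the ultrametric inequality each block of `d`
further powers gains a factor `p⁻ᵏ`, so the entries of `Xⁿ` are `O(p^(-k⌊n/d⌋))`
(`exists_norm_pow_entry_le`). By Legendre's formula `‖n!‖⁻¹ = p^v` with `(p-1) v ≤ n`. Since
`d + 1 ≤ k (p - 1)`, the difference `k⌊n/d⌋ - v` is at least about `⌊n/d⌋ / (p-1)`, so the entries of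
`Xⁿ/n!` tend to `0`, and over a complete ultrametric field this is enough for summability.
-/

open Polynomial in
/-- The Cayley–Hamilton theorem, as a recurrence for the powers of `X`. -/
lemma pow_add_eq_neg_sum {R : Type*} [CommRing R] [Nontrivial R] {d : ℕ}
    (X : Matrix (Fin d) (Fin d) R) (n : ℕ) :
    X ^ (n + d) = -∑ i ∈ Finset.range d, X.charpoly.coeff i • X ^ (n + i) := by
  have hdeg : X.charpoly.natDegree = d := by
    simp
  have hmonic : X.charpoly.coeff d = 1 := by
    have := X.charpoly_monic.coeff_natDegree
    rwa [hdeg] at this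
  have h := X.aeval_self_charpoly
  rw [aeval_eq_sum_range, hdeg, Finset.sum_range_succ, hmonic, one_smul] at h
  rw [pow_add, eq_neg_of_add_eq_zero_right h, mul_neg, Finset.mul_sum]
  simp only [mul_smul_comm, pow_add]

/-- If the lower coefficients of the characteristic polynomial have norm at most `r ≤ 1`, the entries
of `X ^ n` decay like `r ^ ⌊n / d⌋`. -/
lemma exists_norm_pow_entry_le {p : ℕ} [Fact p.Prime] {d : ℕ} (hd : 0 < d)
    (X : Matrix (Fin d) (Fin d) ℚ_[p]) {r : ℝ} (hr : 0 < r)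
    (hchi : ∀ i < d, ‖X.charpoly.coeff i‖ ≤ r) (hr1 : r ≤ 1) :
    ∃ C : ℝ, 0 ≤ C ∧ ∀ n a b, ‖(X ^ n) a b‖ ≤ C * r ^ (n / d) := by
  refine ⟨∑ n ∈ Finset.range d, ∑ a, ∑ b, ‖(X ^ n) a b‖, by positivity, ?_⟩
  set C : ℝ := ∑ n ∈ Finset.range d, ∑ a, ∑ b, ‖(X ^ n) a b‖ with hC
  have hC0 : 0 ≤ C := by positivity
  intro n
  induction n using Nat.strong_induction_on with
  | _ n ih =>
    intro a b
    rcases lt_or_ge n d with hn | hn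
    · rw [Nat.div_eq_of_lt hn, pow_zero, mul_one]
      calc ‖(X ^ n) a b‖ ≤ ∑ b, ‖(X ^ n) a b‖ :=
            Finset.single_le_sum (f := fun b => ‖(X ^ n) a b‖)
              (fun _ _ => norm_nonneg _) (Finset.mem_univ b)
        _ ≤ ∑ a, ∑ b, ‖(X ^ n) a b‖ :=
            Finset.single_le_sum (f := fun a => ∑ b, ‖(X ^ n) a b‖)
              (fun _ _ => by positivity) (Finset.mem_univ a)
        _ ≤ C := Finset.single_le_sum (f := fun n => ∑ a, ∑ b, ‖(X ^ n) a b‖)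
              (fun _ _ => by positivity) (Finset.mem_range.2 hn)
    · obtain ⟨m, rfl⟩ := Nat.exists_eq_add_of_le' hn
      rw [pow_add_eq_neg_sum, Matrix.neg_apply, norm_neg, Matrix.sum_apply,
        Nat.add_div_right _ hd]
      refine IsUltrametricDist.norm_sum_le_of_forall_le_of_nonneg (by positivity) ?_
      intro i hi
      have hi := Finset.mem_range.1 hi
      rw [Matrix.smul_apply, smul_eq_mul, norm_mul]
      have h1 : r ^ ((m + i) / d) ≤ r ^ (m / d) :=
        pow_le_pow_of_le_one hr.le hr1 (Nat.div_le_div_right (by omega))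
      calc _ ≤ r * (C * r ^ (m / d)) := by
            refine mul_le_mul (hchi i hi) ?_ (norm_nonneg _) hr.le
            exact (ih (m + i) (by omega) a b).trans (by gcongr)
        _ = C * r ^ (m / d).succ := by rw [pow_succ]; ring

/-- Legendre's bound on the valuation of `n!` against the decay exponent `k⌊n/d⌋`. -/
lemma padicValNat_factorial_add_le {p d k n : ℕ} [Fact p.Prime]
    (hd : 0 < d) (hdk : d < k * (p - 1)) (hn : d ≤ n / d) :
    padicValNat p n.factorial + (n / d - d) / (p - 1) ≤ k * (n / d) := by
  have hp : 0 < p - 1 := by have := (Fact.out : p.Prime).two_le; omega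
  have hv : (p - 1) * padicValNat p n.factorial ≤ n := by
    rw [sub_one_mul_padicValNat_factorial]; exact Nat.sub_le _ _
  have hm := Nat.mul_div_le (n / d - d) (p - 1)
  have hnd := Nat.div_add_mod n d
  have hmod := Nat.mod_lt n hd
  generalize n / d = q at *
  generalize (q - d) / (p - 1) = m at *
  have hq : (d + 1) * q ≤ k * (p - 1) * q := Nat.mul_le_mul_right _ hdk
  refine Nat.le_of_mul_le_mul_left ?_ hp
  have e1 : (p - 1) * (k * q) = k * (p - 1) * q := by ring
  rw [mul_add, e1]
  rw [add_mul] at hq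
  omega

/-- Let `p` be a prime, `d` and `k` positive integers, and `X` a `d × d`
matrix over `ℚ_p` such that every coefficient of the characteristic polynomial of `X` of degree
strictly less than `d` has `p`-adic absolute value at most `p^{-k}`, and such that
`d < k (p - 1)`. Then the exponential series `exp(X) = ∑_{n ≥ 0} Xⁿ / n!` converges, i.e. the
family `Xⁿ / n!`, `n ≥ 0`, is summable in `M_d(ℚ_p)`. -/
theorem stmt_10 (p : ℕ) [Fact p.Prime] (d k : ℕ) (hd : 0 < d) (hk : 0 < k)
    (X : Matrix (Fin d) (Fin d) ℚ_[p])
    (hchi : ∀ i < d, ‖X.charpoly.coeff i‖ ≤ ((p : ℝ) ^ k)⁻¹)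
    (hdk : d < k * (p - 1)) :
    Summable fun n : ℕ => ((n.factorial : ℚ_[p]))⁻¹ • X ^ n := by
  have hp1 : (1 : ℝ) < p := by exact_mod_cast (Fact.out : p.Prime).one_lt
  have hp0 : (0 : ℝ) < p := by linarith
  have hpp : 0 < p - 1 := by have := (Fact.out : p.Prime).two_le; omega
  obtain ⟨C, hC0, hC⟩ := exists_norm_pow_entry_le hd X (r := ((p : ℝ) ^ k)⁻¹) (by positivity) hchi
    (inv_le_one_of_one_le₀ (one_le_pow₀ hp1.le))
  refine Pi.summable.2 fun a => Pi.summable.2 fun b => ?_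
  refine NonarchimedeanAddGroup.summable_of_tendsto_cofinite_zero ?_
  rw [Nat.cofinite_eq_atTop]
  have hq : Filter.Tendsto (fun n : ℕ => n / d) Filter.atTop Filter.atTop :=
    Nat.tendsto_div_const_atTop hd.ne'
  have hm : Filter.Tendsto (fun n : ℕ => (n / d - d) / (p - 1)) Filter.atTop Filter.atTop :=
    (Nat.tendsto_div_const_atTop hpp.ne').comp ((Filter.tendsto_sub_atTop_nat d).comp hq)
  have hlim : Filter.Tendsto (fun n : ℕ => C * ((p : ℝ)⁻¹) ^ ((n / d - d) / (p - 1)))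
      Filter.atTop (nhds 0) := by
    have := ((tendsto_pow_atTop_nhds_zero_of_lt_one (inv_nonneg.2 hp0.le)
      (inv_lt_one_of_one_lt₀ hp1)).comp hm).const_mul C
    simpa using this
  refine squeeze_zero_norm' ?_ hlim
  filter_upwards [hq.eventually_ge_atTop d] with n hn
  have hle := padicValNat_factorial_add_le hd hdk hn
  have hfac : ‖(n.factorial : ℚ_[p])‖⁻¹ = (p : ℝ) ^ padicValNat p n.factorial := by
    have h0 : (n.factorial : ℚ_[p]) ≠ 0 := by exact_mod_cast n.factorial_ne_zero
    rw [Padic.norm_eq_zpow_neg_valuation h0, Padic.valuation_natCast, zpow_neg, inv_inv,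
      zpow_natCast]
  change ‖(n.factorial : ℚ_[p])⁻¹ * (X ^ n) a b‖ ≤ _
  rw [norm_mul, norm_inv, hfac]
  calc _ ≤ (p : ℝ) ^ padicValNat p n.factorial * (C * (((p : ℝ) ^ k)⁻¹) ^ (n / d)) := by
        gcongr; exact hC n a b
    _ = C * ((p : ℝ) ^ padicValNat p n.factorial * ((p : ℝ) ^ (k * (n / d)))⁻¹) := by
        rw [inv_pow, ← pow_mul]; ring
    _ ≤ C * ((p : ℝ)⁻¹) ^ ((n / d - d) / (p - 1)) := by
        gcongr
        rw [inv_pow, ← div_eq_mul_inv, div_le_iff₀ (by positivity), inv_mul_eq_div,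
          le_div_iff₀ (by positivity), ← pow_add]
        exact pow_le_pow_right₀ hp1.le hle
end

section
/- Let N be a positive integer and let Γ be a finite subgroup of GL(N, ℤ). Then the reduction-modulo-3 homomorphism GL(N, ℤ) → GL(N, ℤ/3ℤ) is injective on Γ; in particular the order of Γ is at most the order of GL(N, ℤ/3ℤ), namely 3^{N(N−1)/2} · ∏_{i=1}^{N} (3^i − 1). -/
/-!
The injectivity is Minkowski's lemma: a matrix `g = 1 + A` of finite order with `A` divisible by `3`
is the identity. Passing to powers, it suffices to treat `g ^ p = 1` with `p` prime. If
`A = 3 ^ k • B` with `k ≥ 1`, expanding `(1 + A) ^ p = 1` gives `p • A = -A ^ 2 * C`, which forces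
`3 ∣ B` when `p ≠ 3`; for `p = 3` the exact expansion `3 • A + 3 • A ^ 2 + A ^ 3 = 0` does the same
(`three_dvd_step`). Hence `A` is divisible by every power of `3`, so `A = 0`.

The bound on the order follows from the formula `∏ (3 ^ N - 3 ^ i)` for the order of
`GL(N, ℤ/3ℤ)`.
-/

/-- The binomial expansion to second order, with unspecified remainder. -/
lemma one_add_pow_eq {R : Type*} [Ring R] (A : R) (n : ℕ) :
    ∃ C : R, (1 + A) ^ n = 1 + (n : ℤ) • A + A * A * C := by
  induction n with
  | zero => exact ⟨0, by simp⟩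
  | succ n ih =>
    obtain ⟨C, hC⟩ := ih
    refine ⟨(n : R) + C * (1 + A), ?_⟩
    rw [pow_succ, hC]
    have h : A * A * (n : R) = (n : R) * (A * A) := (Nat.cast_commute n (A * A)).symm.eq
    simp only [zsmul_eq_mul, mul_add, add_mul, h]
    push_cast
    noncomm_ring

/-- One step of the `3`-adic descent. -/
lemma three_dvd_step {N : ℕ} {p : ℕ} (hp : p.Prime) (k : ℕ) (B : Matrix (Fin N) (Fin N) ℤ)
    (h : (1 + (3 : ℤ) ^ (k + 1) • B) ^ p = 1) :
    ∃ D : Matrix (Fin N) (Fin N) ℤ, B = (3 : ℤ) • D := by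
  have h3 : (3 : ℤ) ^ (k + 1) ≠ 0 := by positivity
  by_cases hp3 : p = 3
  · subst hp3
    refine ⟨-((3 : ℤ) ^ k • (B * B) + (3 : ℤ) ^ (2 * k) • (B * B * B)), ?_⟩
    have h9 : (3 : ℤ) ^ (k + 1) * 3 ≠ 0 := by positivity
    apply smul_right_injective _ h9
    have e : (1 + (3 : ℤ) ^ (k + 1) • B) ^ 3 = 1 + (3 * (3 : ℤ) ^ (k + 1)) • B
        + (3 * (3 : ℤ) ^ (k + 1) * (3 : ℤ) ^ (k + 1)) • (B * B)
        + ((3 : ℤ) ^ (k + 1) * (3 : ℤ) ^ (k + 1) * (3 : ℤ) ^ (k + 1)) • (B * B * B) := by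
      generalize (3 : ℤ) ^ (k + 1) = t
      simp only [pow_succ, pow_zero, one_mul, mul_add, add_mul, mul_one, smul_mul_assoc,
        mul_smul_comm, smul_add, smul_smul]
      module
    rw [e] at h
    ext i j
    have hij := congrFun (congrFun h i) j
    simp only [Matrix.add_apply, Matrix.smul_apply, Matrix.neg_apply, smul_eq_mul] at hij ⊢
    linear_combination hij
  · obtain ⟨C, hC⟩ := one_add_pow_eq ((3 : ℤ) ^ (k + 1) • B) p
    rw [h] at hC
    have hcop : IsCoprime (p : ℤ) 3 := by
      have : Nat.Coprime p 3 := (Nat.coprime_primes hp Nat.prime_three).2 hp3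
      exact_mod_cast Nat.isCoprime_iff_coprime.2 this
    obtain ⟨u, v, huv⟩ := hcop
    refine ⟨v • B - (u * 3 ^ k) • (B * B * C), ?_⟩
    apply smul_right_injective _ h3
    ext i j
    have hij := congrFun (congrFun hC i) j
    simp only [Matrix.add_apply, Matrix.sub_apply, Matrix.smul_apply, smul_eq_mul,
      smul_mul_assoc, mul_smul_comm] at hij ⊢
    linear_combination (-(3 : ℤ) ^ (k + 1) * B i j) * huv - u * hij

lemma eq_one_of_prime_pow_eq_one {N : ℕ} {p : ℕ} (hp : p.Prime) (B : Matrix (Fin N) (Fin N) ℤ)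
    (h : (1 + (3 : ℤ) • B) ^ p = 1) : 1 + (3 : ℤ) • B = 1 := by
  have key : ∀ k : ℕ, ∃ D : Matrix (Fin N) (Fin N) ℤ, (3 : ℤ) • B = (3 : ℤ) ^ (k + 1) • D := by
    intro k
    induction k with
    | zero => exact ⟨B, by simp⟩
    | succ k ih =>
      obtain ⟨D, hD⟩ := ih
      rw [hD] at h
      obtain ⟨E, rfl⟩ := three_dvd_step hp k D h
      exact ⟨E, by rw [hD, smul_smul, ← pow_succ]⟩
  rw [add_eq_left]
  ext i j
  -- An integer divisible by `3 ^ (m + 1)`, where `m` is its absolute value, is zero.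
  obtain ⟨D, hD⟩ := key (((3 : ℤ) • B) i j).natAbs
  have hdvd : (3 : ℤ) ^ ((((3 : ℤ) • B) i j).natAbs + 1) ∣ ((3 : ℤ) • B) i j :=
    ⟨D i j, by simpa using congrFun (congrFun hD i) j⟩
  refine Int.eq_zero_of_dvd_of_natAbs_lt_natAbs hdvd ?_
  rw [Int.natAbs_pow]
  exact (Nat.lt_succ_self _).trans (Nat.lt_pow_self (by norm_num))

/-- Minkowski's lemma for the prime `3`. -/
lemma eq_one_of_map_eq_one {N : ℕ} (n : ℕ) : n ≠ 0 → ∀ g : (Matrix (Fin N) (Fin N) ℤ)ˣ,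
    Units.map ((Int.castRingHom (ZMod 3)).mapMatrix.toMonoidHom) g = 1 → g ^ n = 1 → g = 1 := by
  induction n using induction_on_primes with
  | zero => exact fun h => absurd rfl h
  | one => intro _ g _ h; simpa using h
  | prime_mul p a hp ih =>
    intro hn g hg h
    refine ih (right_ne_zero_of_mul hn) g hg ?_
    have hg' : Units.map ((Int.castRingHom (ZMod 3)).mapMatrix.toMonoidHom) (g ^ a) = 1 := by
      rw [map_pow, hg, one_pow]
    rw [mul_comm, pow_mul] at h
    generalize g ^ a = x at h hg'
    have hB : ∃ B : Matrix (Fin N) (Fin N) ℤ, (x : Matrix (Fin N) (Fin N) ℤ) = 1 + (3 : ℤ) • B := by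
      have hd : ∀ i j, (3 : ℤ) ∣ (x : Matrix (Fin N) (Fin N) ℤ) i j
          - (1 : Matrix (Fin N) (Fin N) ℤ) i j := by
        intro i j
        have hval := congrArg Units.val hg'
        have hx := congrFun (congrFun hval i) j
        have hx' : (((x : Matrix (Fin N) (Fin N) ℤ) i j : ℤ) : ZMod 3)
            = (1 : Matrix (Fin N) (Fin N) (ZMod 3)) i j := by simpa using hx
        refine (ZMod.intCast_zmod_eq_zero_iff_dvd _ 3).1 ?_
        rw [Int.cast_sub, hx', Matrix.one_apply, Matrix.one_apply]
        split_ifs <;> simp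
      choose B hB using hd
      refine ⟨Matrix.of B, ?_⟩
      ext i j
      simp only [Matrix.add_apply, Matrix.smul_apply, Matrix.of_apply, smul_eq_mul]
      linarith [hB i j]
    obtain ⟨B, hB⟩ := hB
    apply Units.ext
    rw [hB, Units.val_one]
    refine eq_one_of_prime_pow_eq_one hp B ?_
    rw [← hB, ← Units.val_pow_eq_pow_val, h, Units.val_one]

lemma prod_three_pow_sub (N : ℕ) : ∏ i : Fin N, (3 ^ N - 3 ^ (i : ℕ)) =
    3 ^ (N * (N - 1) / 2) * ∏ i ∈ Finset.range N, (3 ^ (i + 1) - 1) := by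
  rw [Fin.prod_univ_eq_prod_range (fun i => 3 ^ N - 3 ^ i) N, ← Finset.sum_range_id,
    ← Finset.prod_pow_eq_pow_sum, ← Finset.prod_range_reflect (fun i => 3 ^ (i + 1) - 1),
    ← Finset.prod_mul_distrib]
  refine Finset.prod_congr rfl fun i hi => ?_
  have hi := Finset.mem_range.1 hi
  rw [Nat.mul_sub, mul_one, ← pow_add]
  congr 2
  omega

/-- Let `N` be a positive integer and let `Γ` be a finite subgroup of
`GL(N, ℤ)`. Then the reduction-modulo-3 homomorphism `GL(N, ℤ) → GL(N, ℤ/3ℤ)` (induced by the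
ring homomorphism `ℤ → ℤ/3ℤ` applied entrywise) is injective on `Γ`; in particular the order
of `Γ` is at most the order of `GL(N, ℤ/3ℤ)`, namely
`3 ^ (N (N - 1) / 2) * ∏_{i = 1}^{N} (3 ^ i - 1)`. -/
theorem stmt_12 (N : ℕ) (hN : 0 < N)
    (Γ : Subgroup (Matrix (Fin N) (Fin N) ℤ)ˣ) (hΓ : (Γ : Set (Matrix (Fin N) (Fin N) ℤ)ˣ).Finite) :
    Set.InjOn (Units.map ((Int.castRingHom (ZMod 3)).mapMatrix.toMonoidHom))
        (Γ : Set (Matrix (Fin N) (Fin N) ℤ)ˣ) ∧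
      Nat.card Γ ≤ 3 ^ (N * (N - 1) / 2) * ∏ i ∈ Finset.range N, (3 ^ (i + 1) - 1) := by
  have hinj : Set.InjOn (Units.map ((Int.castRingHom (ZMod 3)).mapMatrix.toMonoidHom))
      (Γ : Set (Matrix (Fin N) (Fin N) ℤ)ˣ) := by
    intro x hx y hy hxy
    have : Finite Γ := hΓ
    have hmem : x * y⁻¹ ∈ Γ := Γ.mul_mem hx (Γ.inv_mem hy)
    obtain ⟨n, hn, hpow⟩ := (isOfFinOrder_of_finite (⟨x * y⁻¹, hmem⟩ : Γ)).exists_pow_eq_one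
    refine mul_inv_eq_one.1 (eq_one_of_map_eq_one n hn.ne' _ ?_ (congrArg Subtype.val hpow))
    rw [map_mul, map_inv, hxy, mul_inv_cancel]
  refine ⟨hinj, ?_⟩
  have : Fact (Nat.Prime 3) := ⟨Nat.prime_three⟩
  have hcard := Matrix.card_GL_field (𝔽 := ZMod 3) N
  rw [ZMod.card, prod_three_pow_sub] at hcard
  rw [← hcard]
  exact Nat.card_le_card_of_injective _ hinj.injective
end

section
/- Let N be a positive integer and let Γ be a finite subgroup of GL(N, ℤ) contained in the kernel of the reduction-modulo-3 homomorphism GL(N, ℤ) → GL(N, ℤ/3ℤ). Then Γ is the trivial group. -/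
/-!
Every `M ∈ Γ` has finite order and satisfies `M ≡ 1 (mod 3)`; such an `M` equals `1`.
Put `D = M - 1`. From `M ^ n = 1` one gets `D * S = 0` with `S = ∑ i < n, M ^ i ≡ n (mod 3)`.
If `3 ∤ n`, then `det S` is nonzero modulo `3`, hence nonzero, so `D = 0`.
If `n = 3`, writing `M = 1 + 3 B` gives `S = 3 (1 + 3 B + 3 B ^ 2)`, and after cancelling the
factor `3` the remaining matrix is `≡ 1 (mod 3)`, so again `D = 0`.
The general case follows by strong induction on `n`: if `n = 3 m`, then `M ^ m` is `≡ 1 (mod 3)`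
with cube `1`, so `M ^ m = 1`.
-/

/-- A square integer matrix whose determinant is nonzero modulo `3` is not a right zero divisor. -/
lemma eq_zero_of_mul_of_det_mod_three {N : ℕ} (D S : Matrix (Fin N) (Fin N) ℤ) (h : D * S = 0)
    (hS : ((Int.castRingHom (ZMod 3)).mapMatrix S).det ≠ 0) : D = 0 := by
  have hdet : S.det ≠ 0 := by
    intro h0
    rw [← RingHom.map_det, h0, map_zero] at hS
    exact hS rfl
  have h1 : S.det • D = 0 := by
    have : D * S * S.adjugate = 0 := by rw [h, zero_mul]
    rwa [mul_assoc, Matrix.mul_adjugate, Matrix.mul_smul, mul_one] at this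
  exact (smul_eq_zero.mp h1).resolve_left hdet

lemma eq_one_of_pow_eq_one_of_not_dvd {N : ℕ} (M : Matrix (Fin N) (Fin N) ℤ) (n : ℕ)
    (hn : ¬ 3 ∣ n) (hM : (Int.castRingHom (ZMod 3)).mapMatrix M = 1) (h : M ^ n = 1) : M = 1 := by
  refine sub_eq_zero.mp (eq_zero_of_mul_of_det_mod_three _ (∑ i ∈ Finset.range n, M ^ i) ?_ ?_)
  · rw [mul_geom_sum, h, sub_self]
  · have hn' : (n : ZMod 3) ≠ 0 := by rwa [Ne, ZMod.natCast_eq_zero_iff]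
    have : Fact (Nat.Prime 3) := ⟨Nat.prime_three⟩
    have hS : (Int.castRingHom (ZMod 3)).mapMatrix (∑ i ∈ Finset.range n, M ^ i)
        = (n : ZMod 3) • (1 : Matrix (Fin N) (Fin N) (ZMod 3)) := by
      rw [map_sum]
      simp only [map_pow, hM, one_pow, Finset.sum_const, Finset.card_range]
      rw [Nat.cast_smul_eq_nsmul]
    rw [hS, Matrix.det_smul, Matrix.det_one, mul_one]
    exact pow_ne_zero _ hn'

lemma eq_one_of_cube_eq_one {N : ℕ} (M : Matrix (Fin N) (Fin N) ℤ)
    (hM : (Int.castRingHom (ZMod 3)).mapMatrix M = 1) (h : M ^ 3 = 1) : M = 1 := by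
  obtain ⟨B, hB⟩ : ∃ B : Matrix (Fin N) (Fin N) ℤ, M - 1 = (3 : ℤ) • B := by
    have hd : ∀ i j, (3 : ℤ) ∣ (M - 1) i j := by
      intro i j
      have h0 : (Int.castRingHom (ZMod 3)).mapMatrix (M - 1) = 0 := by
        rw [map_sub, hM, map_one, sub_self]
      have := congrFun (congrFun h0 i) j
      exact (ZMod.intCast_zmod_eq_zero_iff_dvd _ 3).mp this
    choose B hB using hd
    exact ⟨Matrix.of B, by ext i j; simpa using hB i j⟩
  have hMB : M = 1 + (3 : ℤ) • B := by rw [← hB]; abel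
  -- The cofactor is `(1 + M + M ^ 2) / 3`.
  refine sub_eq_zero.mp (eq_zero_of_mul_of_det_mod_three _ (1 + (3 : ℤ) • (B + B ^ 2)) ?_ ?_)
  · have h3 : (3 : ℤ) • ((M - 1) * (1 + (3 : ℤ) • (B + B ^ 2))) = M ^ 3 - 1 := by
      rw [hMB]
      simp only [zsmul_eq_mul]
      push_cast
      noncomm_ring
    rw [h, sub_self] at h3
    exact (smul_eq_zero.mp h3).resolve_left (by norm_num)
  · have : (Int.castRingHom (ZMod 3)).mapMatrix (1 + (3 : ℤ) • (B + B ^ 2)) = 1 := by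
      rw [map_add, map_one, map_zsmul, ← Int.cast_smul_eq_zsmul (ZMod 3)]
      have : ((3 : ℤ) : ZMod 3) = 0 := by decide
      rw [this, zero_smul, add_zero]
    rw [this, Matrix.det_one]
    decide

lemma eq_one_of_pow_eq_one_of_mod_three {N : ℕ} (M : Matrix (Fin N) (Fin N) ℤ)
    (hM : (Int.castRingHom (ZMod 3)).mapMatrix M = 1) (n : ℕ) (hn : 0 < n) (h : M ^ n = 1) :
    M = 1 := by
  induction n using Nat.strong_induction_on with
  | _ n ih =>
    by_cases hd : 3 ∣ n
    · obtain ⟨m, rfl⟩ := hd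
      refine ih m (by omega) (by omega) (eq_one_of_cube_eq_one _ ?_ ?_)
      · rw [map_pow, hM, one_pow]
      · rw [← pow_mul, mul_comm, h]
    · exact eq_one_of_pow_eq_one_of_not_dvd M n hd hM h

/-- Let `N` be a positive integer and let `Γ` be a finite subgroup of
`GL(N, ℤ)` contained in the kernel of the reduction-modulo-3 homomorphism
`GL(N, ℤ) → GL(N, ℤ/3ℤ)` (induced by the ring homomorphism `ℤ → ℤ/3ℤ` applied entrywise).
Then `Γ` is the trivial group. -/
theorem stmt_13 (N : ℕ) (hN : 0 < N)
    (Γ : Subgroup (Matrix (Fin N) (Fin N) ℤ)ˣ) (hΓ : (Γ : Set (Matrix (Fin N) (Fin N) ℤ)ˣ).Finite)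
    (hker : Γ ≤ (Units.map ((Int.castRingHom (ZMod 3)).mapMatrix.toMonoidHom)).ker) :
    Γ = ⊥ := by
  rw [eq_bot_iff]
  intro g hg
  have hfin : Finite Γ := hΓ.to_subtype
  obtain ⟨n, hn, hpow⟩ := (isOfFinOrder_of_finite (⟨g, hg⟩ : Γ)).exists_pow_eq_one
  have hg1 : g ^ n = 1 := congrArg Subtype.val hpow
  rw [Subgroup.mem_bot]
  refine Units.ext (eq_one_of_pow_eq_one_of_mod_three _ ?_ n hn ?_)
  · exact congrArg Units.val (MonoidHom.mem_ker.mp (hker hg))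
  · exact congrArg Units.val hg1
end

section
/- For every positive integer N there exists a positive integer k = k(N) such that for every prime p and every subgroup U of GL(N, 𝔽_p), there exist elements u₁, …, u_k of U which generate U (i.e. U admits a generating set of cardinality at most k, with k independent of p and of U). -/
/-!
Let `U ≤ GL(N, 𝔽_p)`, so `|U| ≤ p ^ (N²)`, and let `P` be a Sylow `p`-subgroup of `U`.

*Reduction to subgroups of order prime to `p`.* Any subgroup containing the normalizer of `P` has
index `≡ 1` modulo `p`, so a proper inclusion between two such subgroups has index greater than
`p`. A strictly increasing chain from `N_U(P)` to `U` therefore has length at most `N²`, and `U` is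
generated by `N_U(P)` and `N²` further elements. Likewise `P` has at most `N²` generators. By
Schur–Zassenhaus `N_U(P) = P ⋊ K` with `|K|` prime to `p`, and it remains to bound the number of
generators of `K` (`genLE_of_pprime`).

*Passage to characteristic zero.* The reduction `GL(N, ℤ/p^(n+1)) → GL(N, 𝔽_p)` is onto with kernel
a `p`-group, so Schur–Zassenhaus lifts `K` to `GL(N, ℤ/p^(n+1))` for every `n`. Together the lifts
give a representation over the characteristic zero ring `∏ₙ ℤ/p^(n+1)`. It is defined over a
finitely generated subring, which maps to `ℂ` by Zariski's lemma, and faithfulness survives because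
for `g ≠ 1` some entry of the matrix of `g` minus the identity is a unit
(`exists_complex_rep_of_coprime`).

*Finite complex linear groups.* A finite `G ≤ GL(n, ℂ)` is conjugate to a unitary group. The
elements near `1` generate a subgroup `H` whose index is bounded in terms of `n`, by compactness.
If `g` is a nonscalar element of `G` near `1` at minimal distance from `1`, its commutators with
elements near `1` are closer to `1`, hence scalar; having determinant `1` and being near `1` they
are trivial. So `H` either is scalar or centralizes a nonscalar element, and for `n ≥ 2` it leaves
invariant a proper nonzero subspace `W`. The image of `H` in `GL(W)` and the kernel of `H → GL(W)`,
which acts faithfully on the quotient by `W`, are handled by induction on the dimension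
(`exists_genLE_complex`).
-/

/-! ### Groups with a bounded number of generators -/

/-- The subgroup `H` is generated by a set of at most `k` elements. -/
def GenLE {G : Type*} [Group G] (k : ℕ) (H : Subgroup G) : Prop :=
  ∃ S : Finset G, S.card ≤ k ∧ Subgroup.closure (S : Set G) = H

namespace GenLE
variable {G M : Type*} [Group G] [Group M]

theorem mono {k l : ℕ} {H : Subgroup G} (h : GenLE k H) (hkl : k ≤ l) : GenLE l H := by
  obtain ⟨S, hS, hc⟩ := h
  exact ⟨S, hS.trans hkl, hc⟩

theorem map {k : ℕ} {H : Subgroup G} (h : GenLE k H) (f : G →* M) : GenLE k (H.map f) := by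
  classical
  obtain ⟨S, hS, hc⟩ := h
  refine ⟨S.image f, Finset.card_image_le.trans hS, ?_⟩
  rw [Finset.coe_image, ← MonoidHom.map_closure, hc]

theorem sup {k l : ℕ} {H K : Subgroup G} (h : GenLE k H) (h' : GenLE l K) :
    GenLE (k + l) (H ⊔ K) := by
  classical
  obtain ⟨S, hS, hc⟩ := h
  obtain ⟨T, hT, hd⟩ := h'
  refine ⟨S ∪ T, (Finset.card_union_le _ _).trans (add_le_add hS hT), ?_⟩
  rw [Finset.coe_union, Subgroup.closure_union, hc, hd]

theorem of_top {k : ℕ} {H : Subgroup G} (h : GenLE k (⊤ : Subgroup H)) : GenLE k H := by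
  have := h.map H.subtype
  rwa [← MonoidHom.range_eq_map, Subgroup.range_subtype] at this

theorem of_ker_range {k l : ℕ} (f : G →* M) (h : GenLE k f.ker) (h' : GenLE l f.range) :
    GenLE (k + l) (⊤ : Subgroup G) := by
  classical
  obtain ⟨T, hT, hd⟩ := h'
  have hTr : ∀ t ∈ T, ∃ g, f g = t := fun t ht =>
    MonoidHom.mem_range.mp (hd ▸ Subgroup.subset_closure ht)
  choose! s hs using hTr
  have h2 : GenLE l (Subgroup.closure ((T.image s : Finset G) : Set G)) :=
    ⟨T.image s, Finset.card_image_le.trans hT, rfl⟩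
  convert h.sup h2
  have hm : (Subgroup.closure ((T.image s : Finset G) : Set G)).map f = f.range := by
    rw [MonoidHom.map_closure, ← hd]
    congr 1
    ext x
    simp only [Finset.coe_image, Set.mem_image, Finset.mem_coe, exists_exists_and_eq_and]
    constructor
    · rintro ⟨a, ha, rfl⟩
      rwa [hs a ha]
    · intro hx
      exact ⟨x, hx, hs x hx⟩
  symm
  rw [sup_comm, ← Subgroup.comap_map_eq, hm, eq_top_iff]
  intro g _
  exact ⟨g, rfl⟩

end GenLE

/-- If every proper inclusion between subgroups above `H` has index at least `q`, then adjoining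
elements to `H` one at a time reaches the whole group after at most `log_q [G : H]` steps. -/
theorem exists_chain {G : Type*} [Group G] [Finite G] (q : ℕ)
    (H : Subgroup G) (hq : ∀ A B : Subgroup G, H ≤ A → A < B → q ≤ A.relIndex B) :
    ∃ S : Finset G, q ^ S.card ≤ H.index ∧ H ⊔ Subgroup.closure (S : Set G) = ⊤ := by
  classical
  induction H using WellFoundedGT.induction with
  | ind H ih =>
    by_cases hH : H = ⊤
    · exact ⟨∅, by simp [hH], by simp [hH]⟩
    · obtain ⟨g, hg⟩ : ∃ g, g ∉ H := by
        by_contra! h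
        exact hH (eq_top_iff.mpr fun x _ => h x)
      have hlt : H < H ⊔ Subgroup.closure {g} := by
        refine lt_of_le_of_ne le_sup_left fun h => hg ?_
        rw [h]
        exact (le_sup_right : _ ≤ H ⊔ Subgroup.closure {g}) (Subgroup.subset_closure rfl)
      obtain ⟨S, hS, hc⟩ := ih _ hlt fun A B hA hAB => hq A B (hlt.le.trans hA) hAB
      refine ⟨insert g S, ?_, ?_⟩
      · rw [← Subgroup.relIndex_mul_index hlt.le]
        have h1 := hq _ _ le_rfl hlt
        have hpos : 0 < H.relIndex (H ⊔ Subgroup.closure {g}) :=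
          Nat.pos_of_ne_zero Subgroup.index_ne_zero_of_finite
        rcases Nat.eq_zero_or_pos q with rfl | hq0
        · rcases Nat.eq_zero_or_pos (insert g S).card with h0 | h0
          · simp at h0
          · rw [zero_pow h0.ne']; exact Nat.zero_le _
        · calc q ^ (insert g S).card ≤ q ^ (S.card + 1) :=
                Nat.pow_le_pow_right hq0 (Finset.card_insert_le _ _)
            _ = q * q ^ S.card := by ring
            _ ≤ _ := Nat.mul_le_mul h1 hS
      · rw [← hc, Finset.coe_insert, Set.insert_eq, Subgroup.closure_union, sup_assoc]

/-- For `H` containing `N_G(P)`, the Sylow counts of `G` and `H` are `[G : N_G(P)]` and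
`[H : N_G(P)]`; both are `1` modulo `p`, hence so is their quotient `[G : H]`. -/
theorem index_modEq_one {G : Type*} [Group G] [Finite G] {p : ℕ} [Fact p.Prime]
    (P : Sylow p G) (H : Subgroup G) (hH : Subgroup.normalizer (P : Set G) ≤ H) :
    H.index ≡ 1 [MOD p] := by
  have hPH : (P : Subgroup G) ≤ H := Subgroup.le_normalizer.trans hH
  have h1 : (Subgroup.normalizer (P : Set G)).index ≡ 1 [MOD p] := by
    rw [← P.card_eq_index_normalizer]; exact card_sylow_modEq_one p G
  have h2 : (Subgroup.normalizer (P : Set G)).relIndex H ≡ 1 [MOD p] := by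
    have h3 := (P.subtype hPH).card_eq_index_normalizer
    have h4 : Subgroup.normalizer ((P.subtype hPH : Sylow p H) : Set H)
        = (Subgroup.normalizer (P : Set G)).subgroupOf H := by
      have := Subgroup.subgroupOf_normalizer_eq hPH
      exact this.symm
    rw [h4] at h3
    rw [Subgroup.relIndex, ← h3]; exact card_sylow_modEq_one p H
  have h3 := Subgroup.relIndex_mul_index hH
  have h4 : (Subgroup.normalizer (P : Set G)).relIndex H * H.index ≡ 1 * H.index [MOD p] :=
    h2.mul_right _
  rw [h3, one_mul] at h4
  exact h4.symm.trans h1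

theorem relIndex_ge {G : Type*} [Group G] [Finite G] {p : ℕ} [hp : Fact p.Prime]
    (P : Sylow p G) (A B : Subgroup G) (hA : Subgroup.normalizer (P : Set G) ≤ A) (hAB : A < B) :
    p ≤ A.relIndex B := by
  have h1 := index_modEq_one P A hA
  have h2 := index_modEq_one P B (hA.trans hAB.le)
  have h3 : A.relIndex B * B.index ≡ A.relIndex B * 1 [MOD p] := h2.mul_left _
  rw [Subgroup.relIndex_mul_index hAB.le, mul_one] at h3
  have h4 : 1 ≡ A.relIndex B [MOD p] := h1.symm.trans h3
  have h5 : A.relIndex B ≠ 0 := Subgroup.index_ne_zero_of_finite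
  have h6 : A.relIndex B ≠ 1 := fun h => hAB.not_ge (Subgroup.relIndex_eq_one.mp h)
  have h7 := (Nat.modEq_iff_dvd' (by omega)).mp h4
  have := Nat.le_of_dvd (by omega) h7
  omega

theorem relIndex_ge_of_isPGroup {G : Type*} [Group G] [Finite G] {p : ℕ} [hp : Fact p.Prime]
    (hG : IsPGroup p G) (A B : Subgroup G) (hAB : A < B) : p ≤ A.relIndex B := by
  obtain ⟨n, hn⟩ := (hG.to_subgroup B).index (A.subgroupOf B)
  rw [Subgroup.relIndex, hn]
  rcases n with _ | n
  · rw [pow_zero] at hn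
    exact absurd (Subgroup.relIndex_eq_one.mp hn) hAB.not_ge
  · exact Nat.le_self_pow (by omega) p

/-- Reduction to subgroups `K` of order prime to `p`: `G` is generated by a Sylow `p`-subgroup `P`,
a complement of `P` in its normalizer, and at most `m` further elements. -/
theorem genLE_of_pprime {G : Type*} [Group G] [Finite G] {p : ℕ} [hp : Fact p.Prime] {m k : ℕ}
    (hG : Nat.card G ≤ p ^ m)
    (hK : ∀ K : Subgroup G, (Nat.card K).Coprime p → GenLE k K) :
    GenLE (m + (m + k)) (⊤ : Subgroup G) := by
  have hp1 : 1 < p := hp.out.one_lt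
  obtain ⟨P⟩ : Nonempty (Sylow p G) := inferInstance
  set N := Subgroup.normalizer (P : Set G)
  have hPN : (P : Subgroup G) ≤ N := Subgroup.le_normalizer
  have hP : GenLE m (P : Subgroup G) := by
    apply GenLE.of_top
    obtain ⟨S, hS, hc⟩ := exists_chain p (⊥ : Subgroup P)
      fun A B _ hAB => relIndex_ge_of_isPGroup P.2 A B hAB
    refine ⟨S, ?_, by simpa using hc⟩
    rw [Subgroup.index_bot] at hS
    exact (Nat.pow_le_pow_iff_right hp1).mp
      (hS.trans ((Subgroup.card_le_card_group _).trans hG))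
  have hN : GenLE (m + k) N := by
    let P' : Sylow p N := P.subtype hPN
    have : (P' : Subgroup N).Normal := by
      have : (P' : Subgroup N) = (P : Subgroup G).subgroupOf N := rfl
      rw [this]
      exact Subgroup.normal_in_normalizer
    obtain ⟨K, hKc⟩ := Subgroup.exists_right_complement'_of_coprime P'.card_coprime_index
    have hKcard : (Nat.card (K.map N.subtype)).Coprime p := by
      have h1 : Nat.card (K.map N.subtype) = Nat.card K :=
        Nat.card_congr (K.equivMapOfInjective _ N.subtype_injective).toEquiv.symm
      rw [h1, ← (Subgroup.IsComplement'.symm hKc).index_eq_card, Nat.coprime_comm]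
      exact (Nat.Prime.coprime_iff_not_dvd hp.out).mpr P'.not_dvd_index
    have h2 : (P : Subgroup G) ⊔ K.map N.subtype = N := by
      have h3 : (P' : Subgroup N).map N.subtype = P := by
        change ((P : Subgroup G).subgroupOf N).map N.subtype = P
        rw [Subgroup.subgroupOf_map_subtype, inf_eq_left.mpr hPN]
      rw [← h3, ← Subgroup.map_sup, hKc.sup_eq_top, ← MonoidHom.range_eq_map,
        Subgroup.range_subtype]
    rw [← h2]
    exact hP.sup (hK _ hKcard)
  obtain ⟨S, hS, hc⟩ := exists_chain p N fun A B hA hAB => relIndex_ge P A B hA hAB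
  have h3 : S.card ≤ m := (Nat.pow_le_pow_iff_right hp1).mp
    (hS.trans ((Nat.le_of_dvd Nat.card_pos N.index_dvd_card).trans hG))
  rw [← hc, sup_comm]
  exact GenLE.sup ⟨S, h3, rfl⟩ hN

/-! ### Finite unitary groups -/

open scoped Matrix.Norms.L2Operator MatrixOrder ComplexOrder in
/-- A finite complex linear group is conjugate to a unitary one: write the invariant positive
definite form `∑ g, (ρ g)ᴴ * ρ g` as `Bᴴ * B`. -/
theorem exists_unitary_conj {G : Type*} [Group G] [Finite G] {n : ℕ}
    (ρ : G →* Matrix (Fin n) (Fin n) ℂ) :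
    ∃ B : (Matrix (Fin n) (Fin n) ℂ)ˣ, ∀ g,
      (B : Matrix (Fin n) (Fin n) ℂ) * ρ g * (B⁻¹ : (Matrix (Fin n) (Fin n) ℂ)ˣ) ∈
        Matrix.unitaryGroup (Fin n) ℂ := by
  classical
  have := Fintype.ofFinite G
  let A : Matrix (Fin n) (Fin n) ℂ := ∑ g, star (ρ g) * ρ g
  have hinv : ∀ h, star (ρ h) * A * ρ h = A := by
    intro h
    simp only [A, Finset.mul_sum, Finset.sum_mul]
    refine Fintype.sum_equiv (Equiv.mulRight h) _ _ fun g => ?_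
    simp [mul_assoc]
  have hA : A.PosDef := by
    refine Matrix.posDef_sum Finset.univ_nonempty fun g _ => ?_
    refine Matrix.PosDef.conjTranspose_mul_self _ ?_
    have : IsUnit (ρ g) := (Group.isUnit g).map ρ
    exact Matrix.mulVec_injective_of_isUnit this
  obtain ⟨b, hb⟩ := CStarAlgebra.nonneg_iff_eq_star_mul_self.mp hA.posSemidef.nonneg
  have hbu : IsUnit b := by
    have h1 := hA.isUnit
    rw [hb] at h1
    rw [Matrix.isUnit_iff_isUnit_det] at h1 ⊢
    rw [Matrix.det_mul] at h1
    exact isUnit_of_mul_isUnit_right h1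
  obtain ⟨B, rfl⟩ := hbu
  refine ⟨B, fun g => ?_⟩
  rw [Matrix.mem_unitaryGroup_iff']
  have h2 := hinv g
  rw [hb] at h2
  have h3 : star ((B⁻¹ : (Matrix (Fin n) (Fin n) ℂ)ˣ) : Matrix (Fin n) (Fin n) ℂ) *
      star (B : Matrix (Fin n) (Fin n) ℂ) = 1 := by
    rw [← star_mul, Units.mul_inv, star_one]
  calc _ = star ((B⁻¹ : (Matrix (Fin n) (Fin n) ℂ)ˣ) : Matrix (Fin n) (Fin n) ℂ) *
        (star (ρ g) * (star (B : Matrix (Fin n) (Fin n) ℂ) * B) * ρ g) *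
          (B⁻¹ : (Matrix (Fin n) (Fin n) ℂ)ˣ) := by
        simp only [star_mul, mul_assoc]
    _ = 1 := by
        rw [h2, ← mul_assoc, h3, one_mul, Units.mul_inv]

open scoped Matrix.Norms.L2Operator in
/-- An `ε`-separated family of unitary matrices has a number of members bounded in terms of `n`
and `ε`. -/
theorem exists_packing (n : ℕ) (ε : ℝ) (hε : 0 < ε) :
    ∃ C : ℕ, ∀ (ι : Type) (_ : Finite ι) (f : ι → Matrix (Fin n) (Fin n) ℂ),
      (∀ i, f i ∈ Matrix.unitaryGroup (Fin n) ℂ) → (∀ i j, ‖f i - f j‖ < ε → i = j) →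
      Nat.card ι ≤ C := by
  have htb : TotallyBounded (Metric.closedBall (0 : Matrix (Fin n) (Fin n) ℂ) 1) := by
    have : ProperSpace (Matrix (Fin n) (Fin n) ℂ) := FiniteDimensional.proper ℂ _
    exact (isCompact_closedBall _ _).totallyBounded
  obtain ⟨t, ht, hcov⟩ := Metric.totallyBounded_iff.mp htb (ε / 2) (half_pos hε)
  refine ⟨Nat.card t, fun ι _ f hf hsep => ?_⟩
  have hnorm : ∀ i, f i ∈ Metric.closedBall (0 : Matrix (Fin n) (Fin n) ℂ) 1 := by
    intro i
    rw [mem_closedBall_zero_iff]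
    rcases subsingleton_or_nontrivial (Matrix (Fin n) (Fin n) ℂ) with h | h
    · rw [Subsingleton.elim (f i) 0, norm_zero]; exact zero_le_one
    · exact (CStarRing.norm_of_mem_unitary (hf i)).le
  have hex : ∀ i, ∃ y : t, ‖f i - y‖ < ε / 2 := by
    intro i
    have := hcov (hnorm i)
    simp only [Set.mem_iUnion, mem_ball_iff_norm] at this
    obtain ⟨y, hy, h⟩ := this
    exact ⟨⟨y, hy⟩, h⟩
  choose c hc using hex
  have : Finite t := ht
  refine Nat.card_le_card_of_injective c fun i j hij => hsep i j ?_
  calc ‖f i - f j‖ = ‖(f i - c i) - (f j - c i)‖ := by congr 1; abel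
    _ ≤ ‖f i - c i‖ + ‖f j - c i‖ := norm_sub_le _ _
    _ < ε / 2 + ε / 2 := by
        refine add_lt_add (hc i) ?_
        rw [hij]; exact hc j
    _ = ε := by ring

/-- The root of unity `1` is isolated among the `n`-th roots of unity. -/
theorem exists_root_gap (n : ℕ) (hn : 0 < n) :
    ∃ δ : ℝ, 0 < δ ∧ ∀ z : ℂ, z ^ n = 1 → ‖z - 1‖ < δ → z = 1 := by
  have hfin : ({z : ℂ | z ^ n = 1} \ {1}).Finite := by
    refine Set.Finite.subset ((Polynomial.nthRoots n (1 : ℂ)).toFinset.finite_toSet) fun z hz => ?_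
    simpa [Polynomial.mem_nthRoots hn] using hz.1
  have hopen : IsOpen ({z : ℂ | z ^ n = 1} \ {1})ᶜ := hfin.isClosed.isOpen_compl
  obtain ⟨δ, hδ, hsub⟩ := Metric.isOpen_iff.mp hopen 1 (by simp)
  refine ⟨δ, hδ, fun z hz hzδ => ?_⟩
  by_contra hne
  exact hsub (mem_ball_iff_norm.mpr hzδ) ⟨hz, hne⟩

open scoped Matrix.Norms.L2Operator in
theorem norm_unitary_commutator_sub_one_le {n : ℕ} {a b a' b' : Matrix (Fin n) (Fin n) ℂ}
    (ha' : a' ∈ Matrix.unitaryGroup (Fin n) ℂ) (hb' : b' ∈ Matrix.unitaryGroup (Fin n) ℂ)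
    (haa : a * a' = 1) (hbb : b * b' = 1) :
    ‖a * b * a' * b' - 1‖ ≤ 2 * ‖a - 1‖ * ‖b - 1‖ := by
  have h1 : a * b * a' * b' - 1 = ((a - 1) * (b - 1) - (b - 1) * (a - 1)) * a' * b' := by
    have : (a - 1) * (b - 1) - (b - 1) * (a - 1) = a * b - b * a := by noncomm_ring
    rw [this, sub_mul, sub_mul]
    congr 1
    rw [mul_assoc b a a', haa, mul_one, hbb]
  rw [h1, CStarRing.norm_mul_mem_unitary _ hb', CStarRing.norm_mul_mem_unitary _ ha']
  refine (norm_sub_le _ _).trans ?_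
  have h2 := norm_mul_le (a - 1) (b - 1)
  have h3 := norm_mul_le (b - 1) (a - 1)
  linarith

open scoped Matrix.Norms.L2Operator in
/-- A weak form of Jordan's theorem: a finite unitary group has a subgroup of bounded index that
is scalar or centralizes a nonscalar element of the group. -/
theorem exists_index_le_of_unitary (n : ℕ) (hn : 0 < n) :
    ∃ C : ℕ, ∀ (G : Type) [Group G] [Finite G] (ρ : G →* Matrix (Fin n) (Fin n) ℂ),
      (∀ g, ρ g ∈ Matrix.unitaryGroup (Fin n) ℂ) →
      ∃ H : Subgroup G, H.index ≤ C ∧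
        ((∀ h ∈ H, ∃ z : ℂ, ρ h = algebraMap ℂ _ z) ∨
          ∃ g : G, (¬ ∃ z : ℂ, ρ g = algebraMap ℂ _ z) ∧ ∀ h ∈ H, Commute (ρ g) (ρ h)) := by
  have : Nonempty (Fin n) := ⟨⟨0, hn⟩⟩
  obtain ⟨δ, hδ, hgap⟩ := exists_root_gap n hn
  -- `ε ≤ 1 / 4` makes commutators with near elements contract towards `1`;
  -- `ε ≤ δ` forces a scalar commutator near `1` to be trivial.
  obtain ⟨ε, hε, hε3, hεδ⟩ : ∃ ε : ℝ, 0 < ε ∧ ε ≤ 1 / 4 ∧ ε ≤ δ :=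
    ⟨min (1 / 4) δ, lt_min (by norm_num) hδ, min_le_left _ _, min_le_right _ _⟩
  obtain ⟨C, hC⟩ := exists_packing n ε hε
  refine ⟨C, fun G _ _ ρ hρ => ?_⟩
  let near : Set G := {g | ‖ρ g - 1‖ < ε}
  refine ⟨Subgroup.closure near, ?_, ?_⟩
  · refine hC (G ⧸ Subgroup.closure near) inferInstance (fun q => ρ q.out) (fun q => hρ _) ?_
    intro i j hij
    rw [← i.out_eq', ← j.out_eq', QuotientGroup.eq]
    refine Subgroup.subset_closure ?_
    change ‖ρ _ - 1‖ < ε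
    have h1 : ρ (i.out⁻¹ * j.out) - 1 = ρ i.out⁻¹ * (ρ j.out - ρ i.out) := by
      rw [mul_sub, ← map_mul, ← map_mul, inv_mul_cancel, map_one]
    rw [h1, CStarRing.norm_mem_unitary_mul _ (hρ _), norm_sub_rev]
    exact hij
  · by_cases hall : ∀ h ∈ near, ∃ z : ℂ, ρ h = algebraMap ℂ _ z
    · left
      intro h hh
      induction hh using Subgroup.closure_induction'' with
      | mem x hx => exact hall x hx
      | inv_mem x hx =>
        obtain ⟨z, hz⟩ := hall x hx
        refine ⟨z⁻¹, ?_⟩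
        have h1 : ρ x⁻¹ * ρ x = 1 := by rw [← map_mul, inv_mul_cancel, map_one]
        have hz0 : z ≠ 0 := by
          rintro rfl
          rw [hz, map_zero, mul_zero] at h1
          exact zero_ne_one h1
        calc ρ x⁻¹ = ρ x⁻¹ * (ρ x * algebraMap ℂ _ z⁻¹) := by
              rw [hz, ← map_mul, mul_inv_cancel₀ hz0, map_one, mul_one]
          _ = _ := by rw [← mul_assoc, h1, one_mul]
      | one => exact ⟨1, by simp⟩
      | mul x y _ _ hx hy =>
        obtain ⟨z, hz⟩ := hx
        obtain ⟨w, hw⟩ := hy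
        exact ⟨z * w, by rw [map_mul, hz, hw, map_mul]⟩
    · right
      push Not at hall
      obtain ⟨g, ⟨hgn, hgs⟩, hmin⟩ := Set.exists_min_image
        {h : G | h ∈ near ∧ ∀ z : ℂ, ρ h ≠ algebraMap ℂ _ z} (fun h => ‖ρ h - 1‖)
        (Set.toFinite _) hall
      refine ⟨g, by push Not; exact hgs, fun h hh => ?_⟩
      have hg0 : 0 < ‖ρ g - 1‖ := by
        rw [norm_pos_iff, sub_ne_zero]
        intro h1
        exact hgs 1 (by rw [h1, map_one])
      have key : ∀ h ∈ near, Commute (ρ g) (ρ h) := by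
        intro h hh
        have hle : ‖ρ (g * h * g⁻¹ * h⁻¹) - 1‖ ≤ 2 * ‖ρ g - 1‖ * ‖ρ h - 1‖ := by
          simp only [map_mul]
          exact norm_unitary_commutator_sub_one_le (hρ _) (hρ _)
            (by rw [← map_mul, mul_inv_cancel, map_one])
            (by rw [← map_mul, mul_inv_cancel, map_one])
        have hgn' : ‖ρ g - 1‖ < ε := hgn
        have hh' : ‖ρ h - 1‖ < ε := hh
        have hlt : ‖ρ (g * h * g⁻¹ * h⁻¹) - 1‖ < ‖ρ g - 1‖ := by
          nlinarith [norm_nonneg (ρ h - 1)]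
        have hsc : ∃ z : ℂ, ρ (g * h * g⁻¹ * h⁻¹) = algebraMap ℂ _ z := by
          by_contra! hno
          exact absurd (hmin _ ⟨hlt.trans hgn', hno⟩) (not_le.mpr hlt)
        obtain ⟨z, hz⟩ := hsc
        have hz1 : z = 1 := by
          apply hgap
          · have hd : (ρ (g * h * g⁻¹ * h⁻¹)).det = 1 := by
              have e : ∀ x : G, (ρ x).det * (ρ x⁻¹).det = 1 := fun x => by
                rw [← Matrix.det_mul, ← map_mul, mul_inv_cancel, map_one, Matrix.det_one]
              simp only [map_mul, Matrix.det_mul]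
              linear_combination (ρ h).det * (ρ h⁻¹).det * e g + e h
            rw [hz, Algebra.algebraMap_eq_smul_one, Matrix.det_smul] at hd
            simpa using hd
          · have h1 : ‖ρ (g * h * g⁻¹ * h⁻¹) - 1‖ = ‖z - 1‖ := by
              rw [hz, ← map_one (algebraMap ℂ (Matrix (Fin n) (Fin n) ℂ)), ← map_sub,
                norm_algebraMap']
            rw [← h1]
            linarith
        rw [hz1, map_one] at hz
        have h2 : ρ (g * h * g⁻¹ * h⁻¹) * (ρ h * ρ g) = ρ g * ρ h := by
          simp only [← map_mul]
          congr 1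
          group
        rw [hz, one_mul] at h2
        exact h2.symm
      induction hh using Subgroup.closure_induction'' with
      | mem x hx => exact key x hx
      | inv_mem x hx =>
        have h1 := key x hx
        have e1 : ρ x⁻¹ * ρ x = 1 := by rw [← map_mul, inv_mul_cancel, map_one]
        have e2 : ρ x * ρ x⁻¹ = 1 := by rw [← map_mul, mul_inv_cancel, map_one]
        calc ρ g * ρ x⁻¹ = ρ x⁻¹ * ρ x * ρ g * ρ x⁻¹ := by rw [e1, one_mul]
          _ = ρ x⁻¹ * (ρ g * ρ x) * ρ x⁻¹ := by rw [h1.eq]; simp only [mul_assoc]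
          _ = ρ x⁻¹ * ρ g := by simp only [mul_assoc, e2, mul_one]
      | one => rw [map_one]; exact Commute.one_right _
      | mul x y _ _ hx hy => rw [map_mul]; exact hx.mul_right hy

/-! ### Finite complex linear groups -/

theorem genLE_top_of_index_le {G : Type*} [Group G] [Finite G] {H : Subgroup G} {k C : ℕ}
    (hH : GenLE k H) (hC : H.index ≤ C) : GenLE (k + C) (⊤ : Subgroup G) := by
  obtain ⟨S, hS, hc⟩ := exists_chain 2 H fun A B _ hAB => by
    have h5 : A.relIndex B ≠ 0 := Subgroup.index_ne_zero_of_finite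
    have h6 : A.relIndex B ≠ 1 := fun h => hAB.not_ge (Subgroup.relIndex_eq_one.mp h)
    omega
  rw [← hc]
  exact hH.sup ⟨S, ((Nat.lt_two_pow_self).le.trans hS).trans hC, rfl⟩

/-- Up to bounded index, a finite complex linear group of degree at least `2` is reducible: a
scalar group leaves any line invariant, and the centralizer of a nonscalar element leaves its
eigenspaces invariant. -/
theorem exists_invariant_subspace (n : ℕ) (hn : 2 ≤ n) :
    ∃ C : ℕ, ∀ (G : Type) [Group G] [Finite G] (ρ : G →* Module.End ℂ (Fin n → ℂ)),
      ∃ H : Subgroup G, H.index ≤ C ∧ ∃ W : Submodule ℂ (Fin n → ℂ), W ≠ ⊥ ∧ W ≠ ⊤ ∧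
        ∀ h ∈ H, ∀ w ∈ W, ρ h w ∈ W := by
  obtain ⟨C, hC⟩ := exists_index_le_of_unitary n (by omega)
  refine ⟨C, fun G _ _ ρ => ?_⟩
  let e : Matrix (Fin n) (Fin n) ℂ ≃ₐ[ℂ] Module.End ℂ (Fin n → ℂ) := Matrix.toLinAlgEquiv'
  let ρ₁ : G →* Matrix (Fin n) (Fin n) ℂ := (e.symm : _ →* _).comp ρ
  obtain ⟨B, hB⟩ := exists_unitary_conj ρ₁
  let ρ₂ : G →* Matrix (Fin n) (Fin n) ℂ :=
    { toFun := fun g => B * ρ₁ g * (B⁻¹ : (Matrix (Fin n) (Fin n) ℂ)ˣ)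
      map_one' := by simp
      map_mul' := fun g h => by simp [mul_assoc] }
  have hρ₁ : ∀ g, ρ g = e ((B⁻¹ : (Matrix (Fin n) (Fin n) ℂ)ˣ) * ρ₂ g * B) := by
    intro g
    have : ρ₁ g = (B⁻¹ : (Matrix (Fin n) (Fin n) ℂ)ˣ) * ρ₂ g * B := by
      simp [ρ₂, mul_assoc]
    rw [← this]
    simp [ρ₁]
  have hsc : ∀ g z, ρ₂ g = algebraMap ℂ _ z ↔ ρ g = algebraMap ℂ _ z := by
    intro g z
    constructor
    · intro h
      rw [hρ₁, h, ← Algebra.commutes, mul_assoc, Units.inv_mul, mul_one, AlgEquiv.commutes]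
    · intro h
      have h1 : ρ₁ g = algebraMap ℂ _ z := by
        change e.symm (ρ g) = _
        rw [h, AlgEquiv.commutes]
      change B * ρ₁ g * (B⁻¹ : (Matrix (Fin n) (Fin n) ℂ)ˣ) = _
      rw [h1, ← Algebra.commutes, mul_assoc, Units.mul_inv, mul_one]
  obtain ⟨H, hHC, hH⟩ := hC G ρ₂ hB
  clear_value ρ₂ e
  refine ⟨H, hHC, ?_⟩
  rcases hH with hH | ⟨g, hg, hH⟩
  · have hn0 : 0 < n := by omega
    let v : Fin n → ℂ := Pi.single ⟨0, hn0⟩ 1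
    have hv : v ≠ 0 := by simp [v]
    refine ⟨ℂ ∙ v, by simpa using hv, ?_, ?_⟩
    · intro htop
      have h1 := finrank_span_singleton (K := ℂ) hv
      rw [htop, finrank_top, Module.finrank_fin_fun] at h1
      omega
    · intro h hh w hw
      obtain ⟨z, hz⟩ := hH h hh
      rw [(hsc _ _).mp hz, Module.algebraMap_end_apply]
      exact Submodule.smul_mem _ _ hw
  · have : Nontrivial (Fin n → ℂ) := by
      have : Nonempty (Fin n) := ⟨⟨0, by omega⟩⟩
      infer_instance
    obtain ⟨μ, hμ⟩ := Module.End.exists_eigenvalue (ρ g)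
    refine ⟨(ρ g).eigenspace μ, hμ, ?_, ?_⟩
    · intro htop
      refine hg ⟨μ, (hsc _ _).mpr ?_⟩
      refine LinearMap.ext fun v => ?_
      have : v ∈ (ρ g).eigenspace μ := htop ▸ Submodule.mem_top
      rw [Module.End.mem_eigenspace_iff.mp this, Module.algebraMap_end_apply]
    · intro h hh w hw
      have hcomm : ρ g * ρ h = ρ h * ρ g := by
        rw [hρ₁ g, hρ₁ h, ← map_mul, ← map_mul]
        congr 1
        have := (hH h hh).eq
        calc _ = (B⁻¹ : (Matrix (Fin n) (Fin n) ℂ)ˣ) * (ρ₂ g * ρ₂ h) * B := by simp [mul_assoc]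
          _ = _ := by rw [this]; simp [mul_assoc]
      rw [Module.End.mem_eigenspace_iff] at hw ⊢
      change (ρ g * ρ h) w = _
      rw [hcomm, Module.End.mul_apply, hw, map_smul]

/-- In characteristic zero a unipotent element `1 + x` with `x² = 0` of finite order is trivial,
since `(1 + x) ^ m = 1 + m x`. -/
theorem eq_one_of_unipotent {G V : Type*} [Group G] [Finite G] [AddCommGroup V] [Module ℂ V]
    (ρ : G →* Module.End ℂ V) (g : G) (h : (ρ g - 1) * (ρ g - 1) = 0) : ρ g = 1 := by
  have hpow : ∀ m : ℕ, ρ g ^ m = 1 + m • (ρ g - 1) := by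
    intro m
    induction m with
    | zero => simp
    | succ m ih =>
      have h1 : ρ g = 1 + (ρ g - 1) := by abel
      rw [pow_succ, ih]
      nth_rw 2 [h1]
      rw [add_mul, mul_add, mul_add, smul_mul_assoc, smul_mul_assoc, h, add_smul]
      simp
      abel
  have h1 := hpow (orderOf g)
  rw [← map_pow, pow_orderOf_eq_one, map_one, left_eq_add] at h1
  ext v
  have h2 := LinearMap.congr_fun h1 v
  have h0 : (orderOf g : ℂ) ≠ 0 := by exact_mod_cast (orderOf_pos g).ne'
  rw [LinearMap.smul_apply, ← Nat.cast_smul_eq_nsmul ℂ] at h2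
  have h3 := (smul_eq_zero.mp h2).resolve_left h0
  exact sub_eq_zero.mp h3

/-- The number of generators of a finite complex linear group is bounded in terms of its degree.
In dimension at most one the determinant is faithful and the group is cyclic; otherwise an
invariant subspace of a subgroup of bounded index allows induction on the dimension. -/
theorem exists_genLE_complex (n : ℕ) : ∃ k : ℕ, ∀ (G : Type) [Group G] [Finite G]
    (V : Type) [AddCommGroup V] [Module ℂ V] [FiniteDimensional ℂ V],
    Module.finrank ℂ V ≤ n → ∀ ρ : G →* Module.End ℂ V, Function.Injective ρ →
    GenLE k (⊤ : Subgroup G) := by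
  induction n with
  | zero =>
    refine ⟨0, fun G _ _ V _ _ _ hV ρ hρ => ?_⟩
    have hV0 : Subsingleton V := Module.finrank_zero_iff.mp (Nat.le_zero.mp hV)
    have : Subsingleton G := ⟨fun a b => hρ (by ext v; exact Subsingleton.elim _ _)⟩
    exact ⟨∅, le_rfl, Subsingleton.elim _ _⟩
  | succ n ih =>
    obtain ⟨k, hk⟩ := ih
    rcases Nat.eq_zero_or_pos n with rfl | hn
    · refine ⟨1, fun G _ _ V _ _ _ hV ρ hρ => ?_⟩
      have hdet : Function.Injective ((LinearMap.det (M := V) (A := ℂ)).comp ρ) := by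
        intro a b hab
        apply hρ
        rcases Nat.le_one_iff_eq_zero_or_eq_one.mp hV with h0 | h1
        · have hV0 : Subsingleton V := Module.finrank_zero_iff.mp h0
          ext v; exact Subsingleton.elim _ _
        · have hf : ∀ f : Module.End ℂ V, f = LinearMap.det f • LinearMap.id := by
            intro f
            obtain ⟨c, hc, -⟩ := LinearMap.existsUnique_eq_smul_id_of_finrank_eq_one h1 f
            rw [hc, LinearMap.det_smul, h1]
            simp
          rw [hf (ρ a), hf (ρ b)]
          congr 1
      have hcyc : IsCyclic G := isCyclic_of_injective_ringHom _ hdet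
      obtain ⟨g, hg⟩ := hcyc.exists_generator
      refine ⟨{g}, by simp, ?_⟩
      rw [Finset.coe_singleton, ← Subgroup.zpowers_eq_closure, eq_top_iff]
      exact fun x _ => hg x
    · obtain ⟨C, hC⟩ := exists_invariant_subspace (n + 1) (by omega)
      refine ⟨k + k + C, fun G _ _ V _ _ _ hV ρ hρ => ?_⟩
      rcases Nat.lt_or_ge (Module.finrank ℂ V) (n + 1) with hlt | hge
      · exact (hk G V (by omega) ρ hρ).mono (by omega)
      have hVn : Module.finrank ℂ V = n + 1 := le_antisymm hV hge
      let e : V ≃ₗ[ℂ] (Fin (n + 1) → ℂ) := LinearEquiv.ofFinrankEq _ _ (by simp [hVn])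
      let ρ' : G →* Module.End ℂ (Fin (n + 1) → ℂ) := (e.conjRingEquiv : _ →* _).comp ρ
      have hρ' : Function.Injective ρ' := e.conjRingEquiv.injective.comp hρ
      obtain ⟨H, hHC, W, hW0, hW1, hW⟩ := hC G ρ'
      refine genLE_top_of_index_le (GenLE.of_top ?_) hHC
      let σ : H →* Module.End ℂ W :=
        { toFun := fun h => (ρ' h).restrict (hW h h.2)
          map_one' := by ext; simp
          map_mul' := fun a b => by ext; simp }
      have hdim : Module.finrank ℂ (Fin (n + 1) → ℂ) = n + 1 := by simp
      have hWd : Module.finrank ℂ W ≤ n := by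
        have := Submodule.finrank_lt hW1
        omega
      have hQd : Module.finrank ℂ ((Fin (n + 1) → ℂ) ⧸ W) ≤ n := by
        have h1 := Submodule.finrank_quotient_add_finrank W
        have h2 := Submodule.one_le_finrank_iff.mpr hW0
        omega
      refine GenLE.of_ker_range σ.toHomUnits (GenLE.of_top ?_) (GenLE.of_top ?_)
      · let τ : σ.toHomUnits.ker →* Module.End ℂ ((Fin (n + 1) → ℂ) ⧸ W) :=
          { toFun := fun h => W.mapQ W (ρ' h) (hW h h.1.2)
            map_one' := by ext; simp
            map_mul' := fun a b => by ext; simp }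
        refine hk _ _ hQd τ ((injective_iff_map_eq_one τ).mpr fun h hh => ?_)
        have hker : ∀ w ∈ W, ρ' h w = w := by
          intro w hw
          have h1 : σ h = 1 := congrArg Units.val (MonoidHom.mem_ker.mp h.2)
          exact congrArg Subtype.val (LinearMap.congr_fun h1 ⟨w, hw⟩)
        have hquot : ∀ v, ρ' h v - v ∈ W := by
          intro v
          have h1 := LinearMap.congr_fun hh (Submodule.Quotient.mk v)
          exact (Submodule.Quotient.eq W).mp h1
        have : ρ' h = 1 := by
          refine eq_one_of_unipotent ρ' _ ?_
          refine LinearMap.ext fun v => ?_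
          have h1 := hker _ (hquot v)
          simp only [Module.End.mul_apply, LinearMap.sub_apply, Module.End.one_apply]
          rw [h1, sub_self]; rfl
        have h2 : ((h : H) : G) = 1 := hρ' (by rw [this, map_one])
        exact Subtype.ext (Subtype.ext h2)
      · have : Finite σ.toHomUnits.range := (Set.finite_range σ.toHomUnits).to_subtype
        exact hk _ W hWd ((Units.coeHom _).comp σ.toHomUnits.range.subtype)
          (Units.val_injective.comp Subtype.val_injective)

/-! ### Lifting to characteristic zero -/

/-- A homomorphism from a group of order prime to `p` lifts through a surjection whose kernel is a
`p`-group: apply Schur–Zassenhaus to the fibre product `D` of `φ` and `f`. -/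
theorem exists_lift_of_coprime {E Q K : Type*} [Group E] [Group Q] [Group K] [Finite E] [Finite K]
    {p : ℕ} [hp : Fact p.Prime] (f : E →* Q) (hf : Function.Surjective f)
    (hker : IsPGroup p f.ker) (hK : (Nat.card K).Coprime p) (φ : K →* Q) :
    ∃ ψ : K →* E, ∀ g, f (ψ g) = φ g := by
  let D : Subgroup (K × E) :=
    (φ.comp (MonoidHom.fst K E)).eqLocus (f.comp (MonoidHom.snd K E))
  have hD : ∀ d : D, φ d.1.1 = f d.1.2 := fun d => d.2
  let π : D →* K := (MonoidHom.fst K E).comp D.subtype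
  have hπ : Function.Surjective π := by
    intro k
    obtain ⟨x, hx⟩ := hf (φ k)
    exact ⟨⟨(k, x), hx.symm⟩, rfl⟩
  have hkerπ : IsPGroup p π.ker := by
    let θ : π.ker →* f.ker :=
      { toFun := fun d => ⟨d.1.1.2, by
          have h1 : d.1.1.1 = 1 := d.2
          rw [MonoidHom.mem_ker, ← hD d.1, h1, map_one]⟩
        map_one' := rfl
        map_mul' := fun _ _ => rfl }
    refine hker.of_injective θ fun a b hab => ?_
    have h1 : a.1.1.1 = 1 := a.2
    have h2 : b.1.1.1 = 1 := b.2
    exact Subtype.ext (Subtype.ext (Prod.ext (h1.trans h2.symm) (congrArg Subtype.val hab)))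
  have hcop : (Nat.card π.ker).Coprime π.ker.index := by
    obtain ⟨m, hm⟩ := hkerπ.exists_card_eq
    rw [hm, Subgroup.index_ker, MonoidHom.range_eq_top.mpr hπ, Subgroup.card_top]
    exact (hK.pow_right m).symm
  obtain ⟨C, hC⟩ := Subgroup.exists_right_complement'_of_coprime hcop
  have hbij : Function.Bijective (π.comp C.subtype) := by
    constructor
    · rw [injective_iff_map_eq_one]
      intro c hc
      have h1 : (c : D) ∈ π.ker ⊓ C := ⟨hc, c.2⟩
      rw [(Subgroup.IsComplement'.disjoint hC).eq_bot] at h1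
      exact Subtype.ext (Subgroup.mem_bot.mp h1)
    · intro k
      obtain ⟨d, rfl⟩ := hπ k
      obtain ⟨⟨a, c⟩, hac⟩ := hC.2 d
      refine ⟨c, ?_⟩
      have h1 : π a = 1 := a.2
      rw [← hac]
      simp [h1]
  let e : C ≃* K := MulEquiv.ofBijective _ hbij
  refine ⟨(MonoidHom.snd K E).comp (D.subtype.comp (C.subtype.comp e.symm.toMonoidHom)), fun g => ?_⟩
  have h1 := hD (e.symm g : C)
  have h2 : ((e.symm g : C) : D).1.1 = g := e.apply_symm_apply g
  rw [h2] at h1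
  exact h1.symm

theorem isUnit_of_castHom_ne_zero {p : ℕ} [hp : Fact p.Prime] {n : ℕ} (a : ZMod (p ^ (n + 1)))
    (ha : ZMod.castHom (dvd_pow_self p n.succ_ne_zero) (ZMod p) a ≠ 0) : IsUnit a := by
  have : NeZero (p ^ (n + 1)) := ⟨pow_ne_zero _ hp.out.ne_zero⟩
  rw [← ZMod.natCast_zmod_val a] at ha ⊢
  rw [map_natCast, Ne, ZMod.natCast_eq_zero_iff] at ha
  rw [ZMod.isUnit_iff_coprime]
  exact (((Nat.Prime.coprime_iff_not_dvd hp.out).mpr ha).symm).pow_right _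

theorem exists_eq_mul_of_castHom_eq_zero {p : ℕ} [hp : Fact p.Prime] {n : ℕ}
    (a : ZMod (p ^ (n + 1)))
    (ha : ZMod.castHom (dvd_pow_self p n.succ_ne_zero) (ZMod p) a = 0) : ∃ b, a = p * b := by
  have : NeZero (p ^ (n + 1)) := ⟨pow_ne_zero _ hp.out.ne_zero⟩
  rw [← ZMod.natCast_zmod_val a] at ha ⊢
  rw [map_natCast, ZMod.natCast_eq_zero_iff] at ha
  obtain ⟨c, hc⟩ := ha
  exact ⟨c, by rw [hc, Nat.cast_mul]⟩

/-- An element congruent to `1` modulo `p` has `p ^ j`-th power congruent to `1` modulo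
`p ^ (j + 1)`; the ring need not be commutative. -/
theorem pow_prime_pow_sub_one {A : Type*} [Ring A] (p : ℕ) (x y : A)
    (h : x = 1 + p * y) (j : ℕ) : ∃ z : A, x ^ p ^ j = 1 + (p ^ (j + 1) : ℕ) * z := by
  induction j with
  | zero => exact ⟨y, by simpa using h⟩
  | succ j ih =>
    obtain ⟨z, hz⟩ := ih
    rw [pow_succ p j, pow_mul, hz]
    set w : A := (p ^ j : ℕ) * z with hw
    have hw' : ((p ^ (j + 1) : ℕ) : A) * z = p * w := by
      rw [hw, ← mul_assoc, ← Nat.cast_mul, pow_succ']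
    have h1 : ∀ m : ℕ, ∃ u : A, (1 + p * w) ^ m = 1 + p * u := by
      intro m
      induction m with
      | zero => exact ⟨0, by simp⟩
      | succ m ihm =>
        obtain ⟨u, hu⟩ := ihm
        refine ⟨u + w + u * (p * w), ?_⟩
        rw [pow_succ, hu]
        noncomm_ring
    choose u hu using h1
    have h2 : ∑ i ∈ Finset.range p, (1 + p * w) ^ i
        = p * (1 + ∑ i ∈ Finset.range p, u i) := by
      simp only [hu, Finset.sum_add_distrib, ← Finset.mul_sum, mul_add]
      simp
    have h3 := geom_sum_mul (1 + p * w) p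
    rw [h2, add_sub_cancel_left, ← hw'] at h3
    refine ⟨(1 + ∑ i ∈ Finset.range p, u i) * z, ?_⟩
    rw [← sub_eq_iff_eq_add', ← h3, pow_succ' p (j + 1), Nat.cast_mul, mul_assoc, mul_assoc,
      (Nat.cast_commute (p ^ (j + 1)) (1 + ∑ i ∈ Finset.range p, u i)).left_comm]

/-- A representation over `𝔽_p` of a group of order prime to `p` lifts to `ℤ/p^(n+1)`. -/
theorem exists_lift_zmod_pow {p : ℕ} [hp : Fact p.Prime] {N : ℕ} {K : Type*} [Group K] [Finite K]
    (hK : (Nat.card K).Coprime p) (φ : K →* (Matrix (Fin N) (Fin N) (ZMod p))ˣ) (n : ℕ) :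
    ∃ ψ : K →* Matrix (Fin N) (Fin N) (ZMod (p ^ (n + 1))), ∀ g i j,
      ZMod.castHom (dvd_pow_self p n.succ_ne_zero) (ZMod p) (ψ g i j) = (φ g).1 i j := by
  have : NeZero (p ^ (n + 1)) := ⟨pow_ne_zero _ hp.out.ne_zero⟩
  set r : ZMod (p ^ (n + 1)) →+* ZMod p := ZMod.castHom (dvd_pow_self p n.succ_ne_zero) (ZMod p) with hr
  let f : (Matrix (Fin N) (Fin N) (ZMod (p ^ (n + 1))))ˣ →* (Matrix (Fin N) (Fin N) (ZMod p))ˣ :=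
    Units.map (RingHom.mapMatrix r).toMonoidHom
  have hf : Function.Surjective f := by
    intro x
    have hsurj : ∀ i j, ∃ a, r a = x.1 i j := fun i j => ZMod.castHom_surjective _ _
    choose M hM using hsurj
    have hMx : r.mapMatrix (Matrix.of M) = x.1 := by
      ext i j
      exact hM i j
    have hu : IsUnit (Matrix.of M) := by
      rw [Matrix.isUnit_iff_isUnit_det]
      apply isUnit_of_castHom_ne_zero
      rw [← hr, RingHom.map_det, hMx]
      exact ((Matrix.isUnit_iff_isUnit_det _).mp x.isUnit).ne_zero
    obtain ⟨m, hm⟩ := hu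
    refine ⟨m, Units.ext ?_⟩
    rw [← hMx, ← hm]
    rfl
  have hker : IsPGroup p f.ker := by
    intro x
    have h1 : r.mapMatrix x.1.1 = 1 := congrArg Units.val x.2
    have h2 : ∀ i j, ∃ b, (x.1.1 - 1) i j = p * b := by
      intro i j
      apply exists_eq_mul_of_castHom_eq_zero
      rw [← hr]
      have h3 : r.mapMatrix (x.1.1 - 1) = 0 := by rw [map_sub, h1, map_one, sub_self]
      exact congrFun (congrFun h3 i) j
    choose b hb using h2
    have h4 : x.1.1 = 1 + p * Matrix.of b := by
      rw [← sub_eq_iff_eq_add']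
      ext i j
      rw [hb, ← nsmul_eq_mul, ← nsmul_eq_mul]
      rfl
    obtain ⟨z, hz⟩ := pow_prime_pow_sub_one p _ _ h4 n
    have h5 : ((p ^ (n + 1) : ℕ) : Matrix (Fin N) (Fin N) (ZMod (p ^ (n + 1)))) = 0 := by
      rw [← map_natCast (algebraMap (ZMod (p ^ (n + 1))) _), ZMod.natCast_self, map_zero]
    rw [h5, zero_mul, add_zero] at hz
    refine ⟨n, Subtype.ext (Units.ext ?_)⟩
    simpa using hz
  obtain ⟨ψ, hψ⟩ := exists_lift_of_coprime f hf hker hK φ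
  refine ⟨(Units.coeHom _).comp ψ, fun g i j => ?_⟩
  rw [← hψ]
  rfl

/-- By Zariski's lemma the residue fields of `T` are number fields, which embed in `ℂ`. -/
theorem nonempty_algHom_complex (T : Type*) [CommRing T] [Nontrivial T] [Algebra ℚ T]
    [Algebra.FiniteType ℚ T] : Nonempty (T →ₐ[ℚ] ℂ) := by
  obtain ⟨m, hm⟩ := Ideal.exists_maximal T
  let := Ideal.Quotient.field m
  have : Module.Finite ℚ (T ⧸ m) := finite_of_finite_type_of_isJacobsonRing ℚ (T ⧸ m)
  let l : (T ⧸ m) →ₐ[ℚ] ℂ := IsAlgClosed.lift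
  exact ⟨l.comp (Ideal.Quotient.mkₐ ℚ m)⟩

open scoped TensorProduct in
/-- Every finite subset of a ring of characteristic zero lies in a subring that maps to `ℂ`. -/
theorem exists_ringHom_complex {R : Type} [CommRing R] [CharZero R] (F : Set R) (hF : F.Finite) :
    ∃ S : Subalgebra ℤ R, F ⊆ S ∧ Nonempty (S →+* ℂ) := by
  refine ⟨Algebra.adjoin ℤ F, Algebra.subset_adjoin, ?_⟩
  set S := Algebra.adjoin ℤ F
  have hS : Algebra.FiniteType ℤ S :=
    (Subalgebra.fg_iff_finiteType _).mp ⟨hF.toFinset, by simp [S]⟩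
  have hinj : Function.Injective (algebraMap ℤ S) := by
    intro a b hab
    have := congrArg (algebraMap S R) hab
    simpa using this
  have hnt : Nontrivial (ℚ ⊗[ℤ] S) :=
    (Algebra.TensorProduct.includeLeft_injective (S := ℤ) (A := ℚ) hinj).nontrivial
  obtain ⟨l⟩ := nonempty_algHom_complex (ℚ ⊗[ℤ] S)
  exact ⟨l.toRingHom.comp (Algebra.TensorProduct.includeRight : S →ₐ[ℤ] ℚ ⊗[ℤ] S).toRingHom⟩

/-- A representation over a ring of characteristic zero specializes to `ℂ`. The unit entries of
`Φ g - 1` stay nonzero under the specialization, since their inverses are included in the subring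
being specialized. -/
theorem exists_complex_rep {R : Type} [CommRing R] [CharZero R] {N : ℕ} {K : Type} [Group K]
    [Finite K] (Φ : K →* Matrix (Fin N) (Fin N) R)
    (hΦ : ∀ g, g ≠ 1 → ∃ i j, IsUnit ((Φ g - 1) i j)) :
    ∃ χ : K →* Matrix (Fin N) (Fin N) ℂ, Function.Injective χ := by
  obtain ⟨S, hS, ⟨f⟩⟩ := exists_ringHom_complex
    (Set.range (fun t : K × Fin N × Fin N => Φ t.1 t.2.1 t.2.2) ∪
      Set.range (fun t : K × Fin N × Fin N => Ring.inverse ((Φ t.1 - 1) t.2.1 t.2.2)))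
    ((Set.finite_range _).union (Set.finite_range _))
  have hmem : ∀ g i j, Φ g i j ∈ S := fun g i j => hS (Or.inl ⟨(g, i, j), rfl⟩)
  have hinv : ∀ g i j, Ring.inverse ((Φ g - 1) i j) ∈ S := fun g i j =>
    hS (Or.inr ⟨(g, i, j), rfl⟩)
  have hsinj : Function.Injective (S.val.toRingHom.mapMatrix (m := Fin N)) :=
    Matrix.map_injective Subtype.val_injective
  let M : K → Matrix (Fin N) (Fin N) S := fun g => Matrix.of fun i j => ⟨Φ g i j, hmem g i j⟩
  have hM : ∀ g, S.val.toRingHom.mapMatrix (M g) = Φ g := fun g => rfl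
  let Φ' : K →* Matrix (Fin N) (Fin N) S :=
    { toFun := M
      map_one' := hsinj (by rw [hM, map_one, map_one])
      map_mul' := fun a b => hsinj (by rw [hM, map_mul, map_mul, hM, hM]) }
  refine ⟨(RingHom.mapMatrix f).toMonoidHom.comp Φ', ?_⟩
  rw [injective_iff_map_eq_one]
  intro g hg
  by_contra hne
  obtain ⟨i, j, hu⟩ := hΦ g hne
  have h1 : (Φ' g - 1) i j * ⟨_, hinv g i j⟩ = 1 := by
    apply Subtype.val_injective
    have h2 : (((Φ' g - 1) i j : S) : R) = (Φ g - 1) i j := by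
      have : S.val.toRingHom.mapMatrix (Φ' g - 1) = Φ g - 1 := by
        rw [map_sub, map_one]; rfl
      exact congrFun (congrFun this i) j
    change (((Φ' g - 1) i j : S) : R) * _ = 1
    rw [h2]
    exact Ring.mul_inverse_cancel _ hu
  have h3 : f ((Φ' g - 1) i j) = 0 := by
    have : f.mapMatrix (Φ' g - 1) = 0 := by
      rw [map_sub, map_one, sub_eq_zero]; exact hg
    exact congrFun (congrFun this i) j
  have h4 := congrArg f h1
  rw [map_mul, h3, zero_mul, map_one] at h4
  exact zero_ne_one h4

theorem exists_complex_rep_of_coprime {p : ℕ} [hp : Fact p.Prime] {N : ℕ} {K : Type} [Group K]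
    [Finite K] (hK : (Nat.card K).Coprime p) (φ : K →* (Matrix (Fin N) (Fin N) (ZMod p))ˣ)
    (hφ : Function.Injective φ) :
    ∃ χ : K →* Matrix (Fin N) (Fin N) ℂ, Function.Injective χ := by
  choose ψ hψ using exists_lift_zmod_pow hK φ
  let R : Type := ∀ n : ℕ, ZMod (p ^ (n + 1))
  have hR : CharZero R := by
    refine charZero_of_inj_zero fun m hm => ?_
    by_contra h0
    have h1 : ((m : ℕ) : ZMod (p ^ (m + 1))) = 0 := congrFun hm m
    rw [ZMod.natCast_eq_zero_iff] at h1
    have h2 := Nat.le_of_dvd (Nat.pos_of_ne_zero h0) h1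
    have h3 : m + 1 < p ^ (m + 1) := Nat.lt_pow_self hp.out.one_lt
    omega
  let Φ : K →* Matrix (Fin N) (Fin N) R :=
    { toFun := fun g => Matrix.of fun i j n => ψ n g i j
      map_one' := by
        ext i j n
        simp [Matrix.one_apply]
        split_ifs <;> rfl
      map_mul' := fun a b => by
        ext i j n
        simp only [map_mul, Matrix.mul_apply, Matrix.of_apply]
        exact (map_sum (Pi.evalRingHom (fun n => ZMod (p ^ (n + 1))) n)
          (fun l : Fin N => fun n => ψ n a i l * ψ n b l j) Finset.univ).symm }
  refine exists_complex_rep Φ fun g hg => ?_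
  have h1 : (φ g).1 ≠ 1 := fun h => hg (hφ (by rw [map_one]; exact Units.ext h))
  have h2 : ∃ i j, (φ g).1 i j ≠ (1 : Matrix (Fin N) (Fin N) (ZMod p)) i j := by
    by_contra! h
    exact h1 (Matrix.ext h)
  obtain ⟨i, j, hij⟩ := h2
  refine ⟨i, j, Pi.isUnit_iff.mpr fun n => isUnit_of_castHom_ne_zero _ ?_⟩
  have h3 : (Φ g - 1) i j n = ψ n g i j - (1 : Matrix (Fin N) (Fin N) _) i j := by
    simp only [Matrix.sub_apply, Matrix.one_apply]
    split_ifs <;> rfl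
  rw [h3, map_sub, hψ]
  have h4 : ZMod.castHom (dvd_pow_self p n.succ_ne_zero) (ZMod p)
      ((1 : Matrix (Fin N) (Fin N) (ZMod (p ^ (n + 1)))) i j) =
      (1 : Matrix (Fin N) (Fin N) (ZMod p)) i j := by
    simp only [Matrix.one_apply]
    split_ifs <;> simp
  rw [h4]
  exact sub_ne_zero.mpr hij

/-! ### Conclusion -/

/-- For every positive integer `N` there exists a positive integer `k = k(N)`
such that for every prime `p` and every subgroup `U` of `GL(N, 𝔽_p)`, there exist at most `k`
elements of `U` which generate `U`, i.e. `U` admits a generating set of cardinality at most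
`k`, with `k` independent of `p` and of `U`. -/
theorem stmt_14 (N : ℕ) (hN : 0 < N) :
    ∃ k : ℕ, 0 < k ∧ ∀ p : ℕ, p.Prime →
      ∀ U : Subgroup (Matrix (Fin N) (Fin N) (ZMod p))ˣ,
        ∃ S : Finset (Matrix (Fin N) (Fin N) (ZMod p))ˣ,
          (S : Set (Matrix (Fin N) (Fin N) (ZMod p))ˣ) ⊆ (U : Set (Matrix (Fin N) (Fin N) (ZMod p))ˣ) ∧
          S.card ≤ k ∧
          Subgroup.closure (S : Set (Matrix (Fin N) (Fin N) (ZMod p))ˣ) = U := by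
  obtain ⟨k, hk⟩ := exists_genLE_complex N
  refine ⟨N * N + (N * N + k), by positivity, fun p hp U => ?_⟩
  have : Fact p.Prime := ⟨hp⟩
  have hcard : Nat.card U ≤ p ^ (N * N) := by
    calc Nat.card U ≤ Nat.card (Matrix (Fin N) (Fin N) (ZMod p)) :=
          Nat.card_le_card_of_injective (fun u => (u : (Matrix (Fin N) (Fin N) (ZMod p))ˣ).1)
            (Units.val_injective.comp Subtype.val_injective)
      _ = p ^ (N * N) := by
          rw [Nat.card_congr Matrix.of.symm]
          simp [pow_mul]
  have hU : GenLE (N * N + (N * N + k)) (⊤ : Subgroup U) := by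
    refine genLE_of_pprime hcard fun K hK => GenLE.of_top ?_
    obtain ⟨χ, hχ⟩ := exists_complex_rep_of_coprime hK (U.subtype.comp K.subtype)
      (U.subtype_injective.comp K.subtype_injective)
    exact hk K (Fin N → ℂ) (by simp)
      ((Matrix.toLinAlgEquiv' : Matrix (Fin N) (Fin N) ℂ ≃ₐ[ℂ] _).toRingEquiv.toMonoidHom.comp χ)
      ((Matrix.toLinAlgEquiv' : Matrix (Fin N) (Fin N) ℂ ≃ₐ[ℂ] _).injective.comp hχ)
  obtain ⟨S, hS, hc⟩ := hU.of_top
  exact ⟨S, fun x hx => hc ▸ Subgroup.subset_closure hx, hS, hc⟩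
end

section
/- Let p be a prime, N a positive integer, and V a compact subgroup of GL(N, ℤ_p) (the group of invertible N×N matrices over the p-adic integers, with its natural topology). Then V is topologically finitely generated: there exists a finite subset S of V such that the topological closure of the subgroup generated by S equals V. -/
/-!
Let `V_k` be the group of elements of `V` congruent to `1` mod `p ^ k`, and let `L_k` be the set of
residues mod `p` of the matrices `A` with `1 + p ^ k A ∈ V`. For `k ≥ 2`, the `p`-th power of
`1 + p ^ k A` is `1 + p ^ (k + 1) A'` with `A' ≡ A` mod `p` (`pow_p_form`), so `L_k ⊆ L_(k+1)`
(`layer_mono`). As there are finitely many matrices over `ℤ / p`, this chain is constant from some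
`m ≥ 2` on.

Take for `S` a finite set of representatives of `V` mod `p ^ (m + 1)`, and let `H` be the group it
generates. Then `H ∩ V_m` realizes all of `L_m`, and by taking iterated `p`-th powers `H ∩ V_k`
realizes all of `L_m = L_k` for every `k ≥ m` (`layer_mono` applied to `H`). By successive
approximation, `H` meets every class of `V` mod every `p ^ k`, which says that `H` is dense in `V`.
-/

open Filter Topology

/-- Entrywise reduction of a matrix over `ℤ_[p]` modulo `p ^ k`. -/
noncomputable def redMat (p : ℕ) [Fact p.Prime] (N k : ℕ) (A : Matrix (Fin N) (Fin N) ℤ_[p]) :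
    Matrix (Fin N) (Fin N) (ZMod (p ^ k)) :=
  A.map (PadicInt.toZModPow k)

/-- The `k`-th layer of a subgroup `V`: the residues mod `p` of the matrices `A` such that
`1 + p ^ k A` belongs to `V`. -/
def layer {p : ℕ} [Fact p.Prime] {N : ℕ} (V : Subgroup (Matrix (Fin N) (Fin N) ℤ_[p])ˣ) (k : ℕ) :
    Set (Matrix (Fin N) (Fin N) (ZMod (p ^ 1))) :=
  {a | ∃ A : Matrix (Fin N) (Fin N) ℤ_[p], redMat p N 1 A = a ∧
    ∃ g ∈ V, (g : Matrix (Fin N) (Fin N) ℤ_[p]) = 1 + (p : ℤ_[p]) ^ k • A}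

section

variable {p : ℕ} [Fact p.Prime] {N : ℕ}

lemma redMat_eq_iff (k : ℕ) (A B : Matrix (Fin N) (Fin N) ℤ_[p]) :
    redMat p N k A = redMat p N k B ↔ ∃ D, A = B + (p : ℤ_[p]) ^ k • D := by
  constructor
  · intro h
    have h1 : ∀ i j, ∃ d, A i j = B i j + (p : ℤ_[p]) ^ k * d := by
      intro i j
      have h2 : PadicInt.toZModPow k (A i j) = PadicInt.toZModPow k (B i j) :=
        congrFun (congrFun h i) j
      have h3 : A i j - B i j ∈ RingHom.ker (PadicInt.toZModPow (p := p) k) := by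
        rw [RingHom.mem_ker, map_sub, h2, sub_self]
      rw [PadicInt.ker_toZModPow, Ideal.mem_span_singleton] at h3
      obtain ⟨d, hd⟩ := h3
      exact ⟨d, by rw [← hd]; ring⟩
    choose D hD using h1
    exact ⟨Matrix.of D, by ext i j; simp [hD i j]⟩
  · rintro ⟨D, rfl⟩
    have h4 : PadicInt.toZModPow k ((p : ℤ_[p]) ^ k) = 0 := by
      rw [← RingHom.mem_ker, PadicInt.ker_toZModPow]
      exact Ideal.mem_span_singleton_self _
    ext i j
    simp only [redMat, Matrix.map_apply, Matrix.add_apply, Matrix.smul_apply, smul_eq_mul,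
      map_add, map_mul, h4, zero_mul, add_zero]

lemma one_add_pow_form {R : Type*} [Ring R] (x : R) (n : ℕ) :
    ∃ q, (1 + x) ^ n = 1 + n * x + x * x * q := by
  induction n with
  | zero => exact ⟨0, by simp⟩
  | succ n ih =>
    obtain ⟨q, hq⟩ := ih
    refine ⟨n + q + q * x, ?_⟩
    have hc : x * x * (n : R) = n * x * x := by
      rw [(Nat.cast_commute n (x * x)).eq.symm, mul_assoc]
    rw [pow_succ, hq, mul_add (x * x), mul_add (x * x), hc]
    push_cast
    noncomm_ring

/-- The condition `2 ≤ k` makes the quadratic term vanish mod `p ^ (k + 2)`, also for `p = 2`. -/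
lemma pow_p_form {k : ℕ} (hk : 2 ≤ k) (A : Matrix (Fin N) (Fin N) ℤ_[p]) :
    ∃ D, (1 + (p : ℤ_[p]) ^ k • A) ^ p
      = 1 + (p : ℤ_[p]) ^ (k + 1) • (A + (p : ℤ_[p]) ^ 1 • D) := by
  obtain ⟨q, hq⟩ := one_add_pow_form ((p : ℤ_[p]) ^ k • A) p
  obtain ⟨l, rfl⟩ := Nat.exists_eq_add_of_le hk
  refine ⟨(p : ℤ_[p]) ^ l • (A * A * q), ?_⟩
  have hp : (p : Matrix (Fin N) (Fin N) ℤ_[p]) * ((p : ℤ_[p]) ^ (2 + l) • A)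
      = (p : ℤ_[p]) ^ (2 + l + 1) • A := by
    rw [← nsmul_eq_mul, ← Nat.cast_smul_eq_nsmul ℤ_[p], smul_smul, pow_succ']
  rw [hq, hp]
  simp only [smul_mul_assoc, mul_smul_comm, smul_smul, smul_add, add_assoc]
  congr 3
  ring

lemma layer_mono (V : Subgroup (Matrix (Fin N) (Fin N) ℤ_[p])ˣ) {k : ℕ} (hk : 2 ≤ k) :
    layer V k ⊆ layer V (k + 1) := by
  rintro a ⟨A, rfl, g, hg, hgA⟩
  obtain ⟨D, hD⟩ := pow_p_form hk A
  exact ⟨_, (redMat_eq_iff _ _ _).2 ⟨D, rfl⟩, g ^ p, V.pow_mem hg p, by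
    rw [Units.val_pow_eq_pow_val, hgA, hD]⟩

lemma inv_mul_form {k : ℕ} {g h : (Matrix (Fin N) (Fin N) ℤ_[p])ˣ}
    {D : Matrix (Fin N) (Fin N) ℤ_[p]}
    (e : (h : Matrix (Fin N) (Fin N) ℤ_[p]) = g + (p : ℤ_[p]) ^ k • D) :
    ((g⁻¹ * h : (Matrix (Fin N) (Fin N) ℤ_[p])ˣ) : Matrix (Fin N) (Fin N) ℤ_[p])
      = 1 + (p : ℤ_[p]) ^ k • ((g⁻¹ : (Matrix (Fin N) (Fin N) ℤ_[p])ˣ) * D) := by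
  rw [Units.val_mul, e, mul_add, Units.inv_mul, mul_smul_comm]

lemma mul_form {k : ℕ} {g h : (Matrix (Fin N) (Fin N) ℤ_[p])ˣ}
    {D : Matrix (Fin N) (Fin N) ℤ_[p]}
    (e : ((g⁻¹ * h : (Matrix (Fin N) (Fin N) ℤ_[p])ˣ) : Matrix (Fin N) (Fin N) ℤ_[p])
      = 1 + (p : ℤ_[p]) ^ k • D) :
    (h : Matrix (Fin N) (Fin N) ℤ_[p]) = g + (p : ℤ_[p]) ^ k • (g * D) := by
  have : h = g * (g⁻¹ * h) := by group
  rw [this, Units.val_mul, e, mul_add, mul_one, mul_smul_comm]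

lemma tendsto_of_form (x : Matrix (Fin N) (Fin N) ℤ_[p])
    (D : ℕ → Matrix (Fin N) (Fin N) ℤ_[p]) :
    Tendsto (fun k => x + (p : ℤ_[p]) ^ k • D k) atTop (𝓝 x) := by
  refine tendsto_pi_nhds.2 fun i => tendsto_pi_nhds.2 fun j => ?_
  have h0 : Tendsto (fun k : ℕ => (p : ℤ_[p]) ^ k * D k i j) atTop (𝓝 0) := by
    have hp : Tendsto (fun k : ℕ => ‖(p : ℤ_[p])‖ ^ k) atTop (𝓝 0) :=
      tendsto_pow_atTop_nhds_zero_of_lt_one (norm_nonneg _)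
        ((PadicInt.norm_lt_one_iff_dvd _).2 dvd_rfl)
    refine squeeze_zero_norm (fun k => ?_) hp
    rw [norm_mul, norm_pow]
    exact mul_le_of_le_one_right (by positivity) (PadicInt.norm_le_one _)
  simpa using tendsto_const_nhds.add h0

/-- Units congruent to `1` modulo growing powers of `p` converge to `1` in the unit group, whose
topology also controls the inverses. -/
lemma tendsto_one_of_form (w : ℕ → (Matrix (Fin N) (Fin N) ℤ_[p])ˣ)
    (D : ℕ → Matrix (Fin N) (Fin N) ℤ_[p])
    (hw : ∀ k, (w k : Matrix (Fin N) (Fin N) ℤ_[p]) = 1 + (p : ℤ_[p]) ^ k • D k) :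
    Tendsto w atTop (𝓝 1) := by
  have hinv : ∀ k, (((w k)⁻¹ : (Matrix (Fin N) (Fin N) ℤ_[p])ˣ) : Matrix (Fin N) (Fin N) ℤ_[p])
      = 1 + (p : ℤ_[p]) ^ k • (((w k)⁻¹ : (Matrix (Fin N) (Fin N) ℤ_[p])ˣ) * (-D k)) := by
    intro k
    have := inv_mul_form (k := k) (g := w k) (h := 1) (D := -D k) (by rw [hw k]; simp)
    rwa [mul_one] at this
  rw [Units.isInducing_embedProduct.tendsto_nhds_iff]
  simp only [Function.comp_def, Units.embedProduct_apply, inv_one, Units.val_one]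
  refine Tendsto.prodMk_nhds ?_ ?_
  · simp only [hw]
    exact tendsto_of_form 1 D
  · refine (MulOpposite.continuous_op.tendsto _).comp ?_
    rw [funext hinv]
    exact tendsto_of_form 1 _

/-- An element represented in `H` modulo every power of `p` is a limit of elements of `H`. -/
lemma mem_closure_of_approx (H : Subgroup (Matrix (Fin N) (Fin N) ℤ_[p])ˣ)
    (v : (Matrix (Fin N) (Fin N) ℤ_[p])ˣ)
    (h : ∀ k, ∃ g ∈ H, redMat p N k v = redMat p N k g) :
    v ∈ closure (H : Set (Matrix (Fin N) (Fin N) ℤ_[p])ˣ) := by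
  choose g hg hvg using h
  choose D hD using fun k => (redMat_eq_iff k _ _).1 (hvg k)
  have h1 : Tendsto (fun k => (g k)⁻¹ * v) atTop (𝓝 1) :=
    tendsto_one_of_form _ _ fun k => inv_mul_form (hD k)
  have h2 : Tendsto g atTop (𝓝 v) := by
    have := (tendsto_const_nhds (x := v)).mul h1.inv
    simpa using this
  exact mem_closure_of_tendsto h2 (Eventually.of_forall hg)

/-- One step of successive approximation. -/
lemma approx_succ {H V : Subgroup (Matrix (Fin N) (Fin N) ℤ_[p])ˣ} (hHV : H ≤ V) {k : ℕ}
    (hL : layer V k ⊆ layer H k)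
    (h : ∀ v ∈ V, ∃ g ∈ H, redMat p N k v = redMat p N k g) :
    ∀ v ∈ V, ∃ g ∈ H, redMat p N (k + 1) v = redMat p N (k + 1) g := by
  intro v hv
  obtain ⟨g, hg, e⟩ := h v hv
  obtain ⟨D, hD⟩ := (redMat_eq_iff _ _ _).1 e
  have hu := inv_mul_form hD
  obtain ⟨B, hB, b, hb, hbB⟩ := hL ⟨_, rfl, g⁻¹ * v, V.mul_mem (V.inv_mem (hHV hg)) hv, hu⟩
  obtain ⟨E, hE⟩ := (redMat_eq_iff _ _ _).1 hB.symm
  have hub : ((g⁻¹ * v : (Matrix (Fin N) (Fin N) ℤ_[p])ˣ) : Matrix (Fin N) (Fin N) ℤ_[p])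
      = b + (p : ℤ_[p]) ^ (k + 1) • E := by
    rw [hu, hE, hbB, smul_add, smul_smul, ← pow_add, add_assoc]
  have h2 := inv_mul_form hub
  rw [← mul_assoc, ← mul_inv_rev] at h2
  exact ⟨g * b, H.mul_mem hg hb, (redMat_eq_iff _ _ _).2 ⟨_, mul_form h2⟩⟩

/-- If `H` represents `V` modulo `p ^ (m + 1)`, it realizes the whole `m`-th layer of `V`. -/
lemma layer_subset_of_approx {H V : Subgroup (Matrix (Fin N) (Fin N) ℤ_[p])ˣ} {m : ℕ}
    (h : ∀ v ∈ V, ∃ g ∈ H, redMat p N (m + 1) v = redMat p N (m + 1) g) :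
    layer V m ⊆ layer H m := by
  rintro a ⟨A, rfl, v, hv, hvA⟩
  obtain ⟨g, hg, e⟩ := h v hv
  obtain ⟨D, hD⟩ := (redMat_eq_iff _ _ _).1 e.symm
  refine ⟨A + (p : ℤ_[p]) ^ 1 • D, (redMat_eq_iff _ _ _).2 ⟨D, rfl⟩, g, hg, ?_⟩
  rw [hD, hvA, smul_add, smul_smul, ← pow_add, add_assoc]

lemma redMat_of_le {k l : ℕ} (hkl : k ≤ l) {A B : Matrix (Fin N) (Fin N) ℤ_[p]}
    (h : redMat p N l A = redMat p N l B) : redMat p N k A = redMat p N k B := by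
  obtain ⟨D, hD⟩ := (redMat_eq_iff _ _ _).1 h
  obtain ⟨c, rfl⟩ := Nat.exists_eq_add_of_le hkl
  exact (redMat_eq_iff _ _ _).2 ⟨(p : ℤ_[p]) ^ c • D, by rw [hD, smul_smul, ← pow_add]⟩

end

/-- Let `p` be a prime, `N` a positive integer, and `V` a compact subgroup of
`GL(N, ℤ_p)` (the group of invertible `N × N` matrices over the `p`-adic integers, with its
natural topology). Then `V` is topologically finitely generated: there exists a finite subset
`S` of `V` such that the topological closure of the subgroup generated by `S` equals `V`. -/
theorem stmt_15 (p : ℕ) [Fact p.Prime] (N : ℕ) (hN : 0 < N)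
    (V : Subgroup (Matrix (Fin N) (Fin N) ℤ_[p])ˣ)
    (hV : IsCompact (V : Set (Matrix (Fin N) (Fin N) ℤ_[p])ˣ)) :
    ∃ S : Finset (Matrix (Fin N) (Fin N) ℤ_[p])ˣ,
      (S : Set (Matrix (Fin N) (Fin N) ℤ_[p])ˣ) ⊆ (V : Set (Matrix (Fin N) (Fin N) ℤ_[p])ˣ) ∧
      closure ((Subgroup.closure (S : Set (Matrix (Fin N) (Fin N) ℤ_[p])ˣ) :
          Subgroup (Matrix (Fin N) (Fin N) ℤ_[p])ˣ) : Set (Matrix (Fin N) (Fin N) ℤ_[p])ˣ)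
        = (V : Set (Matrix (Fin N) (Fin N) ℤ_[p])ˣ) := by
  classical
  -- By finiteness, the layers of `V` are constant from index `m + 2` on.
  have hmono : Monotone fun n => layer V (n + 2) :=
    monotone_nat_of_le_succ fun n => layer_mono V (by omega)
  obtain ⟨m, hm⟩ := WellFoundedGT.monotone_chain_condition
    (⟨fun n => layer V (n + 2), hmono⟩ :
      ℕ →o Set (Matrix (Fin N) (Fin N) (ZMod (p ^ 1))))
  replace hm : ∀ n, m ≤ n → layer V (m + 2) = layer V (n + 2) := hm
  let f : (Matrix (Fin N) (Fin N) ℤ_[p])ˣ → Matrix (Fin N) (Fin N) (ZMod (p ^ (m + 3))) :=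
    fun v => redMat p N (m + 3) v
  obtain ⟨S, hSV, hS⟩ : ∃ S : Finset (Matrix (Fin N) (Fin N) ℤ_[p])ˣ,
      (S : Set (Matrix (Fin N) (Fin N) ℤ_[p])ˣ) ⊆ V ∧ S.image f = Set.image f V := by
    obtain ⟨S, hS, e⟩ := Finset.subset_set_image_iff.1
      (show ((Set.toFinite (Set.image f (V : Set _))).toFinset : Set _) ⊆ Set.image f (V : Set _) by simp)
    exact ⟨S, hS, by rw [e]; simp⟩
  refine ⟨S, hSV, ?_⟩
  set H := Subgroup.closure (S : Set (Matrix (Fin N) (Fin N) ℤ_[p])ˣ) with hH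
  have hHV : H ≤ V := (Subgroup.closure_le V).2 hSV
  have h0 : ∀ v ∈ V, ∃ g ∈ H, redMat p N (m + 3) v = redMat p N (m + 3) g := by
    intro v hv
    have hfv : f v ∈ (S.image f : Set _) := hS ▸ Set.mem_image_of_mem f hv
    obtain ⟨s, hs, e⟩ := Finset.mem_image.1 (Finset.mem_coe.1 hfv)
    exact ⟨s, Subgroup.subset_closure hs, e.symm⟩
  have hmonoH : Monotone fun n => layer H (n + 2) :=
    monotone_nat_of_le_succ fun n => layer_mono H (by omega)
  have hL : ∀ n, m ≤ n → layer V (n + 2) ⊆ layer H (n + 2) := fun n hn => by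
    rw [← hm n hn]
    exact (layer_subset_of_approx h0).trans (hmonoH hn)
  have happ : ∀ n, ∀ v ∈ V, ∃ g ∈ H, redMat p N (m + 3 + n) v = redMat p N (m + 3 + n) g := by
    intro n
    induction n with
    | zero => exact h0
    | succ n ih =>
      refine approx_succ hHV ?_ ih
      have := hL (m + 1 + n) (by omega)
      rwa [show m + 1 + n + 2 = m + 3 + n by ring] at this
  refine Set.Subset.antisymm (closure_minimal hHV hV.isClosed) fun v hv => ?_
  refine mem_closure_of_approx H v fun k => ?_
  obtain ⟨g, hg, e⟩ := happ k v hv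
  exact ⟨g, hg, redMat_of_le (by omega) e⟩
end
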